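/- arXiv:1711.09794 — 3 statements merged into one kernel-verified Lean document; each statement's English description precedes it below -/
import Mathlib

section
/- For every braid β ∈ B_∞, the substructure ⟨β⟩ of (B_∞, ▷) generated by β (the smallest subset of B_∞ containing β and closed under ▷) is a free left-shelf based on {β}: for every left-shelf (S', ▷') and every a' ∈ S', there is a map φ : ⟨β⟩ → S' with φ(β) = a' and φ(x ▷ y) = φ(x) ▷' φ(y) for all x, y ∈ ⟨β⟩. Moreover, the relation ⊏* restricted to ⟨β⟩ is a strict linear order satisfying a ⊏* a ▷ b and (b ⊏* c ↔ a ▷ b ⊏* a ▷ c) for all a, b, c ∈ ⟨β⟩. -/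
/-- The braid relations on generators indexed by `ℕ` (generator `i` stands for
the Artin generator `σ_{i+1}` of the paper). -/
def braidRels : Set (FreeGroup ℕ) :=
  {r | (∃ i j : ℕ, i + 2 ≤ j ∧
          r = .of i * .of j * (.of i)⁻¹ * (.of j)⁻¹) ∨
       (∃ i : ℕ,
          r = .of i * .of (i + 1) * .of i *
              (.of (i + 1) * .of i * .of (i + 1))⁻¹)}

/-- The braid group on infinitely many strands. -/
abbrev Binf : Type := PresentedGroup braidRels

/-- `σ i` is the Artin generator `σ_{i+1}` of the paper (0-indexed). -/
def σ (i : ℕ) : Binf := PresentedGroup.of i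

lemma mk_rel_eq_one {r : FreeGroup ℕ} (h : r ∈ braidRels) :
    PresentedGroup.mk braidRels r = 1 :=
  (QuotientGroup.eq_one_iff r).mpr (Subgroup.subset_normalClosure h)

lemma shift_lift_eq_one :
    ∀ r ∈ braidRels, FreeGroup.lift (fun n => σ (n + 1)) r = 1 := by
  intro r hr
  have key : ∀ s ∈ braidRels, FreeGroup.lift (fun n => σ (n + 1)) s
      = PresentedGroup.mk braidRels (FreeGroup.map (· + 1) s) := by
    intro s _
    have : (FreeGroup.lift (fun n => σ (n + 1)) : FreeGroup ℕ →* Binf)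
        = (PresentedGroup.mk braidRels).comp (FreeGroup.map (· + 1)) := by
      apply FreeGroup.ext_hom
      intro x
      simp [σ, PresentedGroup.of]
    rw [this]; rfl
  rw [key r hr]
  apply mk_rel_eq_one
  rcases hr with ⟨i, j, hij, rfl⟩ | ⟨i, rfl⟩
  · exact Or.inl ⟨i + 1, j + 1, by omega, by simp⟩
  · exact Or.inr ⟨i + 1, by simp⟩

/-- The shift endomorphism of the braid group, mapping `σ i` to `σ (i+1)`. -/
def sh : Binf →* Binf := PresentedGroup.toGroup shift_lift_eq_one

@[simp] lemma sh_σ (i : ℕ) : sh (σ i) = σ (i + 1) :=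
  PresentedGroup.toGroup.of shift_lift_eq_one

/-- The shifted-conjugation (selfdistributive) operation on `Binf`:
`β₁ ▷ β₂ = β₁ · sh β₂ · σ₁ · (sh β₁)⁻¹`. -/
def sc (β₁ β₂ : Binf) : Binf := β₁ * sh β₂ * σ 0 * (sh β₁)⁻¹

/-- The sub-left-shelf `⟨β⟩` of `(Binf, sc)` generated by `β`: the smallest
subset of `Binf` containing `β` and closed under `sc`. -/
def scClosure (β : Binf) : Set Binf :=
  {x | ∀ P : Binf → Prop, P β → (∀ a b, P a → P b → P (sc a b)) → P x}

universe u

/-! ### Terms and confluence of LD-expansion -/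

inductive Tm : Type
  | x : Tm
  | nd : Tm → Tm → Tm

namespace Tm

/-- One-step LD-expansion. -/
inductive Step : Tm → Tm → Prop
  | root (a b c : Tm) : Step (nd a (nd b c)) (nd (nd a b) (nd a c))
  | left {a a' : Tm} (b : Tm) : Step a a' → Step (nd a b) (nd a' b)
  | right (a : Tm) {b b' : Tm} : Step b b' → Step (nd a b) (nd a b')

abbrev Exp : Tm → Tm → Prop := Relation.ReflTransGen Step

lemma Exp.nd {a a' b b' : Tm} (h : Exp a a') (h' : Exp b b') :
    Exp (nd a b) (nd a' b') := by
  have h1 : Exp (Tm.nd a b) (Tm.nd a' b) := by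
    induction h with
    | refl => exact .refl
    | tail _ s ih => exact ih.tail (.left _ s)
  refine h1.trans ?_
  induction h' with
  | refl => exact .refl
  | tail _ s ih => exact ih.tail (.right _ s)

lemma Exp.root (a b c : Tm) : Exp (Tm.nd a (Tm.nd b c)) (Tm.nd (Tm.nd a b) (Tm.nd a c)) :=
  .single (.root a b c)

/-- Uniform distribution of `t` inside a term. -/
def dist (t : Tm) : Tm → Tm
  | x => nd t x
  | nd a b => nd (dist t a) (dist t b)

lemma exp_dist (t s : Tm) : Exp (nd t s) (dist t s) := by
  induction s with
  | x => exact .refl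
  | nd a b iha ihb => exact (Exp.root t a b).trans (iha.nd ihb)

lemma dist_left {t t' : Tm} (h : Exp t t') (s : Tm) : Exp (dist t s) (dist t' s) := by
  induction s with
  | x => exact h.nd .refl
  | nd a b iha ihb => exact iha.nd ihb

lemma dist_right_step (t : Tm) {s s' : Tm} (h : Step s s') : Exp (dist t s) (dist t s') := by
  induction h with
  | root a b c => exact Exp.root _ _ _
  | left b _ ih => exact ih.nd .refl
  | right a _ ih => exact Exp.nd .refl ih

lemma dist_right (t : Tm) {s s' : Tm} (h : Exp s s') : Exp (dist t s) (dist t s') := by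
  induction h with
  | refl => exact .refl
  | tail _ s ih => exact ih.trans (dist_right_step t s)

lemma dist_mono {t t' s s' : Tm} (h : Exp t t') (h' : Exp s s') :
    Exp (dist t s) (dist t' s') :=
  (dist_left h s).trans (dist_right t' h')

lemma dist_dist (r s u : Tm) : Exp (dist r (dist s u)) (dist (dist r s) (dist r u)) := by
  induction u with
  | x => exact exp_dist (dist r s) (nd r x)
  | nd a b iha ihb => exact iha.nd ihb

/-- Dehornoy's derivation. -/
def der : Tm → Tm
  | x => x
  | nd a b => dist (der a) (der b)

lemma exp_der (t : Tm) : Exp t (der t) := by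
  induction t with
  | x => exact .refl
  | nd a b iha ihb => exact (iha.nd ihb).trans (exp_dist _ _)

lemma step_der {t t' : Tm} (h : Step t t') : Exp t' (der t) := by
  induction h with
  | root a b c =>
    have ha := exp_der a
    have hb := exp_der b
    have hc := exp_der c
    refine Relation.ReflTransGen.trans
      (Exp.nd ((ha.nd hb).trans (exp_dist _ _)) ((ha.nd hc).trans (exp_dist _ _))) ?_
    exact dist_right (der a) (exp_dist (der b) (der c))
  | left b _ ih => exact (ih.nd (exp_der b)).trans (exp_dist _ _)
  | right a _ ih => exact ((exp_der a).nd ih).trans (exp_dist _ _)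

lemma der_step {t t' : Tm} (h : Step t t') : Exp (der t) (der t') := by
  induction h with
  | root a b c => exact dist_dist _ _ _
  | left b _ ih => exact dist_left ih _
  | right a _ ih => exact dist_right _ ih

lemma der_mono {t t' : Tm} (h : Exp t t') : Exp (der t) (der t') := by
  induction h with
  | refl => exact .refl
  | tail _ s ih => exact ih.trans (der_step s)

lemma exp_iter (n : ℕ) (t : Tm) : Exp t (der^[n] t) := by
  induction n with
  | zero => exact .refl
  | succ n ih => rw [Function.iterate_succ_apply']; exact ih.trans (exp_der _)

lemma exp_iter_of_exp {t t' : Tm} (h : Exp t t') : ∃ n, Exp t' (der^[n] t) := by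
  induction h with
  | refl => exact ⟨0, .refl⟩
  | tail _ s ih =>
    obtain ⟨n, hn⟩ := ih
    refine ⟨n + 1, ?_⟩
    rw [Function.iterate_succ_apply']
    exact (step_der s).trans (der_mono hn)

lemma confl {t a b : Tm} (ha : Exp t a) (hb : Exp t b) : ∃ u, Exp a u ∧ Exp b u := by
  obtain ⟨n, hn⟩ := exp_iter_of_exp ha
  obtain ⟨m, hm⟩ := exp_iter_of_exp hb
  refine ⟨der^[m + n] t, ?_, ?_⟩
  · rw [Function.iterate_add_apply]; exact hn.trans (exp_iter _ _)
  · rw [Nat.add_comm, Function.iterate_add_apply]; exact hm.trans (exp_iter _ _)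

/-- LD-equivalence, as having a common expansion. -/
def Eqv (a b : Tm) : Prop := ∃ u, Exp a u ∧ Exp b u

lemma Eqv.symm {a b : Tm} (h : Eqv a b) : Eqv b a := by
  obtain ⟨u, h1, h2⟩ := h; exact ⟨u, h2, h1⟩

lemma Eqv.trans {a b c : Tm} (h : Eqv a b) (h' : Eqv b c) : Eqv a c := by
  obtain ⟨u, h1, h2⟩ := h
  obtain ⟨v, h3, h4⟩ := h'
  obtain ⟨w, h5, h6⟩ := confl h2 h3
  exact ⟨w, h1.trans h5, h4.trans h6⟩

lemma Eqv.refl (a : Tm) : Eqv a a := ⟨a, .refl, .refl⟩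

lemma Eqv.nd {a a' b b' : Tm} (h : Eqv a a') (h' : Eqv b b') :
    Eqv (nd a b) (nd a' b') := by
  obtain ⟨u, h1, h2⟩ := h
  obtain ⟨v, h3, h4⟩ := h'
  exact ⟨_, h1.nd h3, h2.nd h4⟩

/-- Right powers of the generator. -/
def pw : ℕ → Tm
  | 0 => x
  | n + 1 => nd x (pw n)

lemma absorb (t : Tm) : ∃ N, ∀ n, N ≤ n → Eqv (nd t (pw n)) (pw (n + 1)) := by
  induction t with
  | x => exact ⟨0, fun n _ => Eqv.refl _⟩
  | nd a b iha ihb =>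
    obtain ⟨N, hN⟩ := iha
    obtain ⟨M, hM⟩ := ihb
    refine ⟨N + M + 1, fun n hn => ?_⟩
    obtain ⟨m, rfl⟩ : ∃ m, n = m + 1 := ⟨n - 1, by omega⟩
    have h1 := hN m (by omega)
    have h2 := hM m (by omega)
    have h3 := hN (m + 1) (by omega)
    have h4 : Eqv (Tm.nd a (Tm.nd b (pw m))) (Tm.nd (Tm.nd a b) (Tm.nd a (pw m))) :=
      ⟨_, Exp.root _ _ _, .refl⟩
    exact ((Eqv.refl (Tm.nd a b)).nd h1.symm).trans
      (h4.symm.trans (((Eqv.refl a).nd h2).trans h3))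

/-- Proper iterated left subterm. -/
inductive LSub : Tm → Tm → Prop
  | base (a b : Tm) : LSub a (nd a b)
  | left {s a : Tm} (b : Tm) : LSub s a → LSub s (nd a b)

lemma LSub.step {t t' : Tm} (h : Step t t') :
    ∀ s, LSub s t → ∃ s', LSub s' t' ∧ Exp s s' := by
  induction h with
  | root a b c =>
    intro s hs
    cases hs with
    | base => exact ⟨a, .left _ (.base _ _), .refl⟩
    | left _ h => exact ⟨s, .left _ (.left _ h), .refl⟩
  | @left a a' b st ih =>
    intro s hs
    cases hs with
    | base => exact ⟨a', .base _ _, .single st⟩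
    | left _ h =>
      obtain ⟨s', h1, h2⟩ := ih s h
      exact ⟨s', .left _ h1, h2⟩
  | right a st ih =>
    intro s hs
    cases hs with
    | base => exact ⟨a, .base _ _, .refl⟩
    | left _ h => exact ⟨s, .left _ h, .refl⟩

lemma LSub.exp {t t' : Tm} (h : Exp t t') {s : Tm} (hs : LSub s t) :
    ∃ s', LSub s' t' ∧ Exp s s' := by
  induction h with
  | refl => exact ⟨s, hs, .refl⟩
  | tail _ st ih =>
    obtain ⟨s1, h1, h2⟩ := ih
    obtain ⟨s2, h3, h4⟩ := LSub.step st _ h1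
    exact ⟨s2, h3, h2.trans h4⟩

lemma LSub.comparable {t s1 s2 : Tm} (h1 : LSub s1 t) (h2 : LSub s2 t) :
    LSub s1 s2 ∨ s1 = s2 ∨ LSub s2 s1 := by
  induction h1 with
  | base b =>
    cases h2 with
    | base => exact .inr (.inl rfl)
    | left _ h => exact .inr (.inr h)
  | left b h ih =>
    cases h2 with
    | base => exact .inl h
    | left _ h => exact ih h

/-- The comparison property of monogenic left-shelves. -/
lemma comparison (t1 t2 : Tm) : ∃ s1 s2, Exp t1 s1 ∧ Exp t2 s2 ∧
    (LSub s1 s2 ∨ s1 = s2 ∨ LSub s2 s1) := by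
  obtain ⟨N, hN⟩ := absorb t1
  obtain ⟨M, hM⟩ := absorb t2
  obtain ⟨u, h1, h2⟩ := (hN (N + M) (by omega)).trans (hM (N + M) (by omega)).symm
  obtain ⟨s1, l1, e1⟩ := LSub.exp h1 (LSub.base _ _)
  obtain ⟨s2, l2, e2⟩ := LSub.exp h2 (LSub.base _ _)
  exact ⟨s1, s2, e1, e2, l1.comparable l2⟩

/-- Evaluation of a term. -/
def ev {S : Type*} (op : S → S → S) (a : S) : Tm → S
  | x => a
  | nd s t => op (ev op a s) (ev op a t)

lemma ev_exp {S : Type*} (op : S → S → S) (hop : ∀ a b c, op a (op b c) = op (op a b) (op a c))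
    (a : S) {t t' : Tm} (h : Exp t t') : ev op a t = ev op a t' := by
  induction h with
  | refl => rfl
  | tail h' st ih =>
    rw [ih]
    clear ih h'
    induction st with
    | root a b c => exact hop _ _ _
    | left b _ ih => simp only [ev, ih]
    | right a _ ih => simp only [ev, ih]

end Tm

/-! ### Larue's argument for acyclicity -/

abbrev Ltr := ℕ × Bool

def Ltr.inv (a : Ltr) : Ltr := (a.1, !a.2)

lemma mk_cons_cancel (a : Ltr) (L : List Ltr) :
    (FreeGroup.mk [a])⁻¹ * FreeGroup.mk (a :: L) = FreeGroup.mk L := by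
  rw [inv_mul_eq_iff_eq_mul, FreeGroup.mul_mk]; rfl

lemma mk_cons_mul (a : Ltr) (L : List Ltr) :
    FreeGroup.mk (a :: L) = FreeGroup.mk [a] * FreeGroup.mk L := by
  rw [FreeGroup.mul_mk]; rfl

lemma mk_inv_letter (a : Ltr) : FreeGroup.mk [a.inv] = (FreeGroup.mk [a])⁻¹ := by
  simp [FreeGroup.inv_mk, FreeGroup.invRev, Ltr.inv]

lemma red_cons {a : Ltr} {L : List Ltr} : FreeGroup.IsReduced (a :: L) ↔
    L.head? ≠ some a.inv ∧ FreeGroup.IsReduced L := by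
  obtain ⟨i, e⟩ := a
  cases L with
  | nil => simp
  | cons b L =>
    obtain ⟨j, f⟩ := b
    rw [FreeGroup.isReduced_cons_cons]
    cases e <;> cases f <;> simp [eq_comm, Ltr.inv]

/-- The heads of reduced words after applying `a ↦ a b a⁻¹`, `b ↦ a`. -/
def HeadCond (a b : Ltr) : Option Ltr → List Ltr → Prop
  | none, M => M = []
  | some c, M =>
    (c = a → ∃ M', M = a :: b :: M') ∧
    (c = a.inv → ∃ M', M = a :: b.inv :: M') ∧
    (c = b → ∃ M', M = a :: M' ∧ M'.head? ≠ some b ∧ M'.head? ≠ some b.inv) ∧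
    (c = b.inv → M.head? = some a.inv ∨ M.head? = some b ∨ M.head? = some b.inv) ∧
    (c.1 ≠ a.1 → c.1 ≠ b.1 → M.head? = some c)

lemma letter_cases (a b c : Ltr) :
    c = a ∨ c = a.inv ∨ c = b ∨ c = b.inv ∨ (c.1 ≠ a.1 ∧ c.1 ≠ b.1) := by
  obtain ⟨i, e⟩ := a
  obtain ⟨j, f⟩ := b
  obtain ⟨k, g⟩ := c
  by_cases h : k = i <;> by_cases h' : k = j <;> cases e <;> cases f <;> cases g <;>
    simp [h, h', Ltr.inv]

@[simp] lemma ltr_inv_inv (a : Ltr) : a.inv.inv = a := by simp [Ltr.inv]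

@[simp] lemma ltr_inv_fst (a : Ltr) : a.inv.1 = a.1 := rfl

lemma ltr_ne_inv (a : Ltr) : a ≠ a.inv := by
  intro h; have := congrArg Prod.snd h; simp [Ltr.inv] at this

lemma ltr_ne {a b : Ltr} (h : a.1 ≠ b.1) : a ≠ b := fun h' => h (congrArg Prod.fst h')

lemma headCond_facts {a b : Ltr} (hab : a.1 ≠ b.1) {o : Option Ltr} {M : List Ltr}
    (hM : FreeGroup.IsReduced M) (h : HeadCond a b o M) :
    (o ≠ some a.inv → (∃ M1, M = a :: M1 ∧ M1.head? ≠ some b.inv) ∨ M.head? ≠ some a) ∧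
    (o ≠ some a → (∃ M1, M = a :: M1 ∧ M1.head? ≠ some b) ∨ M.head? ≠ some a) ∧
    (o ≠ some b.inv → M.head? ≠ some a.inv ∧ M.head? ≠ some b ∧ M.head? ≠ some b.inv) ∧
    (o ≠ some b → (∃ M1, M = a :: M1 ∧ (M1.head? = some b ∨ M1.head? = some b.inv)) ∨
      M.head? ≠ some a) ∧
    (∀ c : Ltr, c.1 ≠ a.1 → c.1 ≠ b.1 → o ≠ some c → M.head? ≠ some c) := by
  have e1 := ltr_ne_inv a
  have e2 := ltr_ne_inv b
  have e3 : a ≠ b := ltr_ne hab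
  have e4 : a ≠ b.inv := ltr_ne (by simpa using hab)
  have e5 : a.inv ≠ b := ltr_ne (by simpa using hab)
  have e6 : a.inv ≠ b.inv := ltr_ne (by simpa using hab)
  have e7 : ∀ c : Ltr, c.1 ≠ a.1 → c ≠ a ∧ c ≠ a.inv := fun c h => ⟨ltr_ne h, ltr_ne h⟩
  have e8 : ∀ c : Ltr, c.1 ≠ b.1 → c ≠ b ∧ c ≠ b.inv := fun c h => ⟨ltr_ne h, ltr_ne h⟩
  cases o with
  | none => 
    have : M = [] := h
    subst this
    simp
  | some d =>
    obtain ⟨h1, h2, h3, h4, h5⟩ := h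
    rcases letter_cases a b d with hd | hd | hd | hd | ⟨hd, hd'⟩
    · obtain ⟨M', rfl⟩ := h1 hd
      subst hd
      clear h1 h2 h3 h4 h5
      grind
    · obtain ⟨M', rfl⟩ := h2 hd
      subst hd
      clear h1 h2 h3 h4 h5
      grind
    · obtain ⟨M', rfl, g1, g2⟩ := h3 hd
      subst hd
      clear h1 h2 h3 h4 h5
      grind
    · have := h4 hd
      subst hd
      clear h1 h2 h3 h4 h5
      grind
    · have := h5 hd hd'
      clear h1 h2 h3 h4 h5
      grind

lemma larue (φ : FreeGroup ℕ →* FreeGroup ℕ) (a b : Ltr) (hab : a.1 ≠ b.1)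
    (ha : φ (FreeGroup.mk [a]) = FreeGroup.mk [a] * FreeGroup.mk [b] * (FreeGroup.mk [a])⁻¹)
    (hb : φ (FreeGroup.mk [b]) = FreeGroup.mk [a])
    (hc : ∀ c : Ltr, c.1 ≠ a.1 → c.1 ≠ b.1 → φ (FreeGroup.mk [c]) = FreeGroup.mk [c])
    (L : List Ltr) (hL : FreeGroup.IsReduced L) :
    ∃ M, FreeGroup.IsReduced M ∧ φ (FreeGroup.mk L) = FreeGroup.mk M ∧
      HeadCond a b L.head? M := by
  have hai : φ (FreeGroup.mk [a.inv]) =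
      FreeGroup.mk [a] * FreeGroup.mk [b.inv] * (FreeGroup.mk [a])⁻¹ := by
    rw [mk_inv_letter, mk_inv_letter, map_inv, ha]; group
  have hbi : φ (FreeGroup.mk [b.inv]) = FreeGroup.mk [a.inv] := by
    rw [mk_inv_letter, mk_inv_letter, map_inv, hb]
  have e1 := ltr_ne_inv a
  have e2 := ltr_ne_inv b
  have e3 : a ≠ b := ltr_ne hab
  have e4 : a ≠ b.inv := ltr_ne (by simpa using hab)
  have e5 : a.inv ≠ b := ltr_ne (by simpa using hab)
  have e6 : a.inv ≠ b.inv := ltr_ne (by simpa using hab)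
  induction L with
  | nil => exact ⟨[], .nil, map_one φ, rfl⟩
  | cons c L ih =>
    rw [red_cons] at hL
    obtain ⟨hLh, hLr⟩ := hL
    obtain ⟨M, hM, hφ, hH⟩ := ih hLr
    obtain ⟨f1, f2, f3, f4, f5⟩ := headCond_facts hab hM hH
    rw [mk_cons_mul, map_mul, hφ]
    have e7 : ∀ c : Ltr, c.1 ≠ a.1 → c ≠ a ∧ c ≠ a.inv := fun c h => ⟨ltr_ne h, ltr_ne h⟩
    have e8 : ∀ c : Ltr, c.1 ≠ b.1 → c ≠ b ∧ c ≠ b.inv := fun c h => ⟨ltr_ne h, ltr_ne h⟩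
    have i1 := ltr_inv_inv a
    have i2 := ltr_inv_inv b
    rcases letter_cases a b c with hcc | hcc | hcc | hcc | ⟨h1, h2⟩
    · subst hcc
      rw [ha]
      rcases f1 hLh with ⟨M1, rfl, hM1⟩ | hMa
      · refine ⟨c :: b :: M1, ?_, ?_, ?_⟩
        · rw [red_cons] at hM
          rw [red_cons, red_cons]
          grind only [= List.head?_cons]
        · rw [mul_assoc, mk_cons_cancel, mul_assoc, ← mk_cons_mul, ← mk_cons_mul]
        · simp only [List.head?_cons, HeadCond]
          grind
      · refine ⟨c :: b :: c.inv :: M, ?_, ?_, ?_⟩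
        · rw [red_cons, red_cons, red_cons]
          grind only [= List.head?_cons]
        · rw [← mk_inv_letter, mul_assoc, mul_assoc, ← mk_cons_mul, ← mk_cons_mul, ← mk_cons_mul]
        · simp only [List.head?_cons, HeadCond]
          grind
    · subst hcc
      rw [hai]
      rcases f2 (by simpa using hLh) with ⟨M1, rfl, hM1⟩ | hMa
      · refine ⟨a :: b.inv :: M1, ?_, ?_, ?_⟩
        · rw [red_cons] at hM
          rw [red_cons, red_cons]
          grind only [= List.head?_cons]
        · rw [mul_assoc, mk_cons_cancel, mul_assoc, ← mk_cons_mul, ← mk_cons_mul]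
        · simp only [List.head?_cons, HeadCond]
          grind
      · refine ⟨a :: b.inv :: a.inv :: M, ?_, ?_, ?_⟩
        · rw [red_cons, red_cons, red_cons]
          grind only [= List.head?_cons]
        · rw [← mk_inv_letter a, mul_assoc, mul_assoc, ← mk_cons_mul, ← mk_cons_mul,
            ← mk_cons_mul]
        · simp only [List.head?_cons, HeadCond]
          grind
    · subst hcc
      rw [hb]
      obtain ⟨g1, g2, g3⟩ := f3 hLh
      refine ⟨a :: M, ?_, ?_, ?_⟩
      · rw [red_cons]
        exact ⟨g1, hM⟩
      · rw [← mk_cons_mul]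
      · simp only [List.head?_cons, HeadCond]
        grind
    · subst hcc
      rw [hbi]
      rcases f4 (by simpa using hLh) with ⟨M1, rfl, hM1⟩ | hMa
      · refine ⟨M1, (red_cons.1 hM).2, ?_, ?_⟩
        · rw [mk_inv_letter, mk_cons_cancel]
        · simp only [List.head?_cons, HeadCond]
          grind
      · refine ⟨a.inv :: M, ?_, ?_, ?_⟩
        · rw [red_cons, i1]
          exact ⟨hMa, hM⟩
        · rw [← mk_cons_mul]
        · simp only [List.head?_cons, HeadCond]
          grind
    · rw [hc c h1 h2]
      refine ⟨c :: M, ?_, ?_, ?_⟩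
      · rw [red_cons]
        exact ⟨f5 c.inv h1 h2 hLh, hM⟩
      · rw [← mk_cons_mul]
      · simp only [List.head?_cons, HeadCond]
        grind

/-- Artin's endomorphism. -/
def artE (i : ℕ) : FreeGroup ℕ →* FreeGroup ℕ :=
  FreeGroup.lift fun j => if j = i then .of i * .of (i + 1) * (.of i)⁻¹
    else if j = i + 1 then .of i else .of j

/-- Inverse of Artin's endomorphism. -/
def artI (i : ℕ) : FreeGroup ℕ →* FreeGroup ℕ :=
  FreeGroup.lift fun j => if j = i then .of (i + 1)
    else if j = i + 1 then (.of (i + 1))⁻¹ * .of i * .of (i + 1) else .of j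

lemma artE_self (i : ℕ) : artE i (.of i) = .of i * .of (i + 1) * (.of i)⁻¹ := by simp [artE]
lemma artE_succ (i : ℕ) : artE i (.of (i + 1)) = .of i := by simp [artE]
lemma artE_other {i j : ℕ} (h : j ≠ i) (h' : j ≠ i + 1) : artE i (.of j) = .of j := by
  simp [artE, h, h']
lemma artI_self (i : ℕ) : artI i (.of i) = .of (i + 1) := by simp [artI]
lemma artI_succ (i : ℕ) :
    artI i (.of (i + 1)) = (.of (i + 1))⁻¹ * .of i * .of (i + 1) := by simp [artI]
lemma artI_other {i j : ℕ} (h : j ≠ i) (h' : j ≠ i + 1) : artI i (.of j) = .of j := by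
  simp [artI, h, h']

/-- Artin's automorphism. -/
def art (i : ℕ) : MulAut (FreeGroup ℕ) :=
  MonoidHom.toMulEquiv (artE i) (artI i)
    (by
      apply FreeGroup.ext_hom
      intro j
      rw [MonoidHom.comp_apply, MonoidHom.id_apply]
      by_cases h : j = i
      · subst h
        rw [artE_self, map_mul, map_mul, map_inv, artI_self, artI_succ]; group
      · by_cases h' : j = i + 1
        · subst h'
          rw [artE_succ, artI_self]
        · rw [artE_other h h', artI_other h h'])
    (by
      apply FreeGroup.ext_hom
      intro j
      rw [MonoidHom.comp_apply, MonoidHom.id_apply]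
      by_cases h : j = i
      · subst h
        rw [artI_self, artE_succ]
      · by_cases h' : j = i + 1
        · subst h'
          rw [artI_succ, map_mul, map_mul, map_inv, artE_self, artE_succ]; group
        · rw [artI_other h h', artE_other h h'])

lemma art_apply (i : ℕ) (g : FreeGroup ℕ) : art i g = artE i g := rfl
lemma art_inv_apply (i : ℕ) (g : FreeGroup ℕ) : (art i)⁻¹ g = artI i g := rfl

lemma mulAut_ext {f g : MulAut (FreeGroup ℕ)} (h : ∀ j, f (.of j) = g (.of j)) : f = g := by
  have : f.toMonoidHom = g.toMonoidHom := FreeGroup.ext_hom _ _ h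
  ext x
  exact DFunLike.congr_fun this x

lemma art_comm {i j : ℕ} (h : i + 2 ≤ j) : art i * art j = art j * art i := by
  apply mulAut_ext
  intro k
  simp only [MulAut.mul_apply, art_apply]
  have a1 : artE i (.of j) = .of j := artE_other (by omega) (by omega)
  have a2 : artE i (.of (j + 1)) = .of (j + 1) := artE_other (by omega) (by omega)
  have a3 : artE j (.of i) = .of i := artE_other (by omega) (by omega)
  have a4 : artE j (.of (i + 1)) = .of (i + 1) := artE_other (by omega) (by omega)
  by_cases h1 : k = i
  · subst h1; simp only [a3, artE_self, map_mul, map_inv, a4]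
  by_cases h2 : k = i + 1
  · subst h2; simp only [a3, artE_succ, a4]
  by_cases h3 : k = j
  · subst h3; simp only [a1, artE_self, map_mul, map_inv, a2]
  by_cases h4 : k = j + 1
  · subst h4; simp only [a1, artE_succ, a2]
  rw [artE_other h3 h4, artE_other h1 h2, artE_other h3 h4]

lemma art_braid (i : ℕ) :
    art i * art (i + 1) * art i = art (i + 1) * art i * art (i + 1) := by
  apply mulAut_ext
  intro k
  simp only [MulAut.mul_apply, art_apply]
  have a1 : artE i (.of (i + 1 + 1)) = .of (i + 1 + 1) := artE_other (by omega) (by omega)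
  have a2 : artE (i + 1) (.of i) = .of i := artE_other (by omega) (by omega)
  by_cases h1 : k = i
  · subst h1
    simp only [artE_self, artE_succ, map_mul, map_inv, a1, a2]; group
  by_cases h2 : k = i + 1
  · subst h2
    simp only [artE_self, artE_succ, map_mul, map_inv, a1, a2]
  by_cases h3 : k = i + 1 + 1
  · subst h3
    simp only [artE_succ, a1, a2]
  rw [artE_other h1 h2, artE_other h2 h3, artE_other h1 h2, artE_other h2 h3]

lemma art_rels : ∀ r ∈ braidRels, FreeGroup.lift art r = 1 := by
  rintro r (⟨i, j, hij, rfl⟩ | ⟨i, rfl⟩)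
  · simp only [map_mul, map_inv, FreeGroup.lift_apply_of, art_comm hij]; group
  · simp only [map_mul, map_inv, FreeGroup.lift_apply_of, art_braid]; group

/-- Artin's representation. -/
def rep : Binf →* MulAut (FreeGroup ℕ) := PresentedGroup.toGroup art_rels

lemma rep_σ (i : ℕ) : rep (σ i) = art i := PresentedGroup.toGroup.of art_rels

/-- The reduced word begins with the generator `0`. -/
def Start (g : FreeGroup ℕ) : Prop := g.toWord.head? = some (0, true)

lemma start_mk {M : List Ltr} (h : FreeGroup.IsReduced M) :
    Start (FreeGroup.mk M) ↔ M.head? = some (0, true) := by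
  rw [Start, FreeGroup.toWord_mk, h.reduce_eq]

lemma of_eq_mk (i : ℕ) : (FreeGroup.of i : FreeGroup ℕ) = FreeGroup.mk [(i, true)] := rfl

lemma art_larue (i : ℕ) (L : List Ltr) (hL : FreeGroup.IsReduced L) :
    ∃ M, FreeGroup.IsReduced M ∧ artE i (FreeGroup.mk L) = FreeGroup.mk M ∧
      HeadCond (i, true) (i + 1, true) L.head? M := by
  apply larue _ _ _ (by simp) _ _ _ L hL
  · exact artE_self i
  · exact artE_succ i
  · rintro ⟨j, e⟩ h h'
    have := artE_other h h'
    cases e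
    · have h2 : FreeGroup.mk [(j, false)] = (FreeGroup.of j)⁻¹ := rfl
      rw [h2, map_inv, this]
    · exact this

lemma artI_larue (i : ℕ) (L : List Ltr) (hL : FreeGroup.IsReduced L) :
    ∃ M, FreeGroup.IsReduced M ∧ artI i (FreeGroup.mk L) = FreeGroup.mk M ∧
      HeadCond (i + 1, false) (i, false) L.head? M := by
  have h2 : ∀ j : ℕ, FreeGroup.mk [(j, false)] = (FreeGroup.of j)⁻¹ := fun _ => rfl
  apply larue _ _ _ (by simp) _ _ _ L hL
  · rw [h2, h2, map_inv, artI_succ]; group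
  · rw [h2, h2, map_inv, artI_self]
  · rintro ⟨j, e⟩ h h'
    have := artI_other h' h
    cases e
    · rw [h2, map_inv, this]
    · exact this

lemma start_zero {g : FreeGroup ℕ} (h : Start g) : Start (art 0 g) := by
  obtain ⟨M, h1, h2, h3⟩ := art_larue 0 g.toWord FreeGroup.isReduced_toWord
  rw [FreeGroup.mk_toWord] at h2
  rw [art_apply, h2, start_mk h1]
  rw [show g.toWord.head? = _ from h] at h3
  obtain ⟨M', rfl⟩ := h3.1 rfl
  rfl

lemma start_zero_inv : Start (art 0 (FreeGroup.of 0)⁻¹) := by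
  obtain ⟨M, h1, h2, h3⟩ := art_larue 0 [(0, false)] (by simp)
  have h2' : art 0 (FreeGroup.of 0)⁻¹ = FreeGroup.mk M := h2
  rw [h2', start_mk h1]
  obtain ⟨M', rfl⟩ := h3.2.1 rfl
  rfl

lemma start_succ (i : ℕ) {g : FreeGroup ℕ} (h : Start g) : Start (art (i + 1) g) := by
  obtain ⟨M, h1, h2, h3⟩ := art_larue (i + 1) g.toWord FreeGroup.isReduced_toWord
  rw [FreeGroup.mk_toWord] at h2
  rw [art_apply, h2, start_mk h1]
  rw [show g.toWord.head? = _ from h] at h3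
  exact h3.2.2.2.2 (by simp) (by simp)

lemma start_succ_inv (i : ℕ) {g : FreeGroup ℕ} (h : Start g) : Start ((art (i + 1))⁻¹ g) := by
  obtain ⟨M, h1, h2, h3⟩ := artI_larue (i + 1) g.toWord FreeGroup.isReduced_toWord
  rw [FreeGroup.mk_toWord] at h2
  rw [art_inv_apply, h2, start_mk h1]
  rw [show g.toWord.head? = _ from h] at h3
  exact h3.2.2.2.2 (by simp) (by simp)

lemma sh_good (y : Binf) :
    (∀ g, Start g → Start (rep (sh y) g)) ∧ (∀ g, Start g → Start ((rep (sh y))⁻¹ g)) ∧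
      rep (sh y) (FreeGroup.of 0) = FreeGroup.of 0 := by
  have hy : y ∈ Subgroup.closure (Set.range (PresentedGroup.of (rels := braidRels))) := by
    rw [PresentedGroup.closure_range_of]; trivial
  induction hy using Subgroup.closure_induction with
  | mem y hy =>
    obtain ⟨i, rfl⟩ := hy
    have : rep (sh (PresentedGroup.of i)) = art (i + 1) := by
      rw [show (PresentedGroup.of i : Binf) = σ i from rfl, sh_σ, rep_σ]
    rw [this]
    exact ⟨fun g => start_succ i, fun g => start_succ_inv i, 
      artE_other (i := i + 1) (j := 0) (by omega) (by omega)⟩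
  | one => simp
  | mul a b _ _ iha ihb =>
    simp only [map_mul, mul_inv_rev, MulAut.mul_apply]
    exact ⟨fun g h => iha.1 _ (ihb.1 _ h), fun g h => ihb.2.1 _ (iha.2.1 _ h),
      by rw [ihb.2.2, iha.2.2]⟩
  | inv a _ iha =>
    simp only [map_inv, inv_inv]
    refine ⟨iha.2.1, iha.1, ?_⟩
    have := congrArg (fun g => (rep (sh a))⁻¹ g) iha.2.2
    rw [MulAut.inv_apply_self] at this
    exact this.symm

/-- Braids with Larue's positivity property. -/
def LPos (b : Binf) : Prop :=
  (∀ g, Start g → Start (rep b g)) ∧ Start (rep b (FreeGroup.of 0)⁻¹)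

lemma LPos.mul {a b : Binf} (ha : LPos a) (hb : LPos b) : LPos (a * b) := by
  simp only [LPos, map_mul, MulAut.mul_apply]
  exact ⟨fun g h => ha.1 _ (hb.1 _ h), by simpa using ha.1 _ hb.2⟩

lemma LPos.basic (u v : Binf) : LPos (sh u * σ 0 * sh v) := by
  obtain ⟨u1, _, _⟩ := sh_good u
  obtain ⟨v1, _, v3⟩ := sh_good v
  simp only [LPos, map_mul, MulAut.mul_apply, rep_σ]
  refine ⟨fun g h => u1 _ (start_zero (v1 _ h)), ?_⟩
  rw [map_inv (rep (sh v)), v3]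
  exact u1 _ start_zero_inv

lemma LPos.ne_one {b : Binf} (h : LPos b) : b ≠ 1 := by
  rintro rfl
  have := h.2
  simp [Start, FreeGroup.invRev] at this

lemma transGen_LPos {P : Set Binf} {a b : Binf}
    (h : Relation.TransGen (fun a b : Binf => ∃ x ∈ P, sc a x = b) a b) : LPos (a⁻¹ * b) := by
  have key : ∀ a x : Binf, LPos (a⁻¹ * sc a x) := by
    intro a x
    have : a⁻¹ * sc a x = sh x * σ 0 * sh a⁻¹ := by
      rw [sc, map_inv]; group
    rw [this]; exact LPos.basic _ _
  induction h with
  | single h => obtain ⟨x, _, rfl⟩ := h; exact key _ _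
  | @tail b c _ h ih =>
    obtain ⟨x, _, rfl⟩ := h
    have := ih.mul (key b x)
    rwa [mul_assoc, mul_inv_cancel_left] at this

lemma transGen_irrefl {P : Set Binf} {a : Binf} :
    ¬ Relation.TransGen (fun a b : Binf => ∃ x ∈ P, sc a x = b) a a := fun h =>
  (transGen_LPos h).ne_one (inv_mul_cancel a)

lemma σ_braid : σ 0 * σ 1 * σ 0 = σ 1 * σ 0 * σ 1 := by
  have := mk_rel_eq_one (Or.inr ⟨0, rfl⟩ : _ ∈ braidRels)
  rw [map_mul, map_inv, mul_inv_eq_one] at this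
  simp only [map_mul] at this
  exact this

lemma σ_comm {i j : ℕ} (h : i + 2 ≤ j) : σ i * σ j = σ j * σ i := by
  have := mk_rel_eq_one (Or.inl ⟨i, j, h, rfl⟩ : _ ∈ braidRels)
  rw [map_mul, map_inv, mul_inv_eq_one, map_mul, map_inv, mul_inv_eq_iff_eq_mul] at this
  simp only [map_mul] at this
  exact this

lemma σ0_comm (y : Binf) : Commute (σ 0) (sh (sh y)) := by
  have hy : y ∈ Subgroup.closure (Set.range (PresentedGroup.of (rels := braidRels))) := by
    rw [PresentedGroup.closure_range_of]; trivial
  induction hy using Subgroup.closure_induction with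
  | mem y hy =>
    obtain ⟨i, rfl⟩ := hy
    rw [show (PresentedGroup.of i : Binf) = σ i from rfl, sh_σ, sh_σ]
    exact σ_comm (by omega)
  | one => simp
  | mul a b _ _ iha ihb => simp only [map_mul]; exact iha.mul_right ihb
  | inv a _ iha => simp only [map_inv]; exact iha.inv_right

lemma sc_ld (a b c : Binf) : sc a (sc b c) = sc (sc a b) (sc a c) := by
  have h1 := σ_braid
  have h2 := σ0_comm a
  have h3 := σ0_comm b
  have h4 := σ0_comm c
  simp only [sc, map_mul, map_inv, sh_σ, mul_inv_rev, inv_inv]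
  generalize sh (sh a) = A at *
  generalize sh (sh b) = B at *
  generalize sh (sh c) = C at *
  have h5 : A⁻¹ * σ 0 * A = σ 0 := by rw [mul_assoc, h2.eq, inv_mul_cancel_left]
  have h6 : σ 0 * σ 1 * σ 0 * (σ 1)⁻¹ = σ 1 * σ 0 := by
    rw [h1, mul_inv_cancel_right]
  calc a * (sh b * C * σ (0 + 1) * B⁻¹) * σ 0 * (sh a)⁻¹
      = a * sh b * C * σ 1 * (B⁻¹ * σ 0) * (sh a)⁻¹ := by group
    _ = a * sh b * C * (σ 1 * σ 0) * B⁻¹ * (sh a)⁻¹ := by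
      rw [← h3.inv_right.eq]; group
    _ = a * sh b * (C * σ 0) * σ 1 * (A⁻¹ * σ 0 * A) * (σ 1)⁻¹ * B⁻¹ * (sh a)⁻¹ := by
      rw [h5, ← h6]; group
    _ = _ := by rw [← h4.eq]; group

lemma ev_mem (β : Binf) (t : Tm) : t.ev sc β ∈ scClosure β := by
  intro P h0 h1
  induction t with
  | x => exact h0
  | nd a b iha ihb => exact h1 _ _ iha ihb

lemma exists_tm {β x : Binf} (h : x ∈ scClosure β) : ∃ t : Tm, t.ev sc β = x :=
  h (fun x => ∃ t : Tm, t.ev sc β = x) ⟨.x, rfl⟩ (by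
    rintro _ _ ⟨s, rfl⟩ ⟨t, rfl⟩
    exact ⟨.nd s t, rfl⟩)

lemma lsub_lt (β : Binf) {s t : Tm} (h : Tm.LSub s t) :
    Relation.TransGen (fun a b : Binf => ∃ x ∈ scClosure β, sc a x = b)
      (s.ev sc β) (t.ev sc β) := by
  induction h with
  | base b => exact .single ⟨b.ev sc β, ev_mem β b, rfl⟩
  | left b _ ih => exact ih.tail ⟨b.ev sc β, ev_mem β b, rfl⟩

lemma tm_compare (β : Binf) (s t : Tm) :
    Relation.TransGen (fun a b : Binf => ∃ x ∈ scClosure β, sc a x = b)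
      (s.ev sc β) (t.ev sc β) ∨
    (∃ s', Tm.Exp s s' ∧ Tm.Exp t s') ∨
    Relation.TransGen (fun a b : Binf => ∃ x ∈ scClosure β, sc a x = b)
      (t.ev sc β) (s.ev sc β) := by
  obtain ⟨s', t', h1, h2, h⟩ := Tm.comparison s t
  rw [Tm.ev_exp sc sc_ld β h1, Tm.ev_exp sc sc_ld β h2]
  rcases h with h | rfl | h
  · exact .inl (lsub_lt β h)
  · exact .inr (.inl ⟨s', h1, h2⟩)
  · exact .inr (.inr (lsub_lt β h))

lemma ev_unique (β : Binf) {s t : Tm} (h : s.ev sc β = t.ev sc β)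
    {S : Type*} [Shelf S] (a : S) : s.ev Shelf.act a = t.ev Shelf.act a := by
  rcases tm_compare β s t with h' | ⟨s', h1, h2⟩ | h'
  · rw [h] at h'; exact absurd h' transGen_irrefl
  · rw [Tm.ev_exp _ (fun _ _ _ => Shelf.self_distrib) a h1,
      Tm.ev_exp _ (fun _ _ _ => Shelf.self_distrib) a h2]
  · rw [h] at h'; exact absurd h' transGen_irrefl

lemma sc_mem {β a b : Binf} (ha : a ∈ scClosure β) (hb : b ∈ scClosure β) :
    sc a b ∈ scClosure β := fun P h0 h1 => h1 _ _ (ha P h0 h1) (hb P h0 h1)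

lemma sc_mono {β a b c : Binf} (ha : a ∈ scClosure β)
    (h : Relation.TransGen (fun a b : Binf => ∃ x ∈ scClosure β, sc a x = b) b c) :
    Relation.TransGen (fun a b : Binf => ∃ x ∈ scClosure β, sc a x = b) (sc a b) (sc a c) := by
  refine Relation.TransGen.lift (sc a) ?_ _ _ h
  rintro b _ ⟨x, hx, rfl⟩
  exact ⟨sc a x, sc_mem ha hx, (sc_ld a b x).symm⟩

/-- for every braid `β`, the sub-left-shelf `⟨β⟩` generated by
`β` is free based on `{β}`, and iterated division is a strict linear order
on `⟨β⟩` satisfying (3.1). -/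
theorem subshelf_free (β : Binf) :
    (∀ (S' : Type u) [Shelf S'] (a' : S'),
      ∃ φ : Binf → S', φ β = a' ∧
        ∀ x ∈ scClosure β, ∀ y ∈ scClosure β,
          φ (sc x y) = Shelf.act (φ x) (φ y)) ∧
    (∀ a ∈ scClosure β,
      ¬ Relation.TransGen (fun a b : Binf => ∃ x ∈ scClosure β, sc a x = b) a a) ∧
    (∀ a ∈ scClosure β, ∀ b ∈ scClosure β, ∀ c ∈ scClosure β,
      Relation.TransGen (fun a b : Binf => ∃ x ∈ scClosure β, sc a x = b) a b →
      Relation.TransGen (fun a b : Binf => ∃ x ∈ scClosure β, sc a x = b) b c →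
      Relation.TransGen (fun a b : Binf => ∃ x ∈ scClosure β, sc a x = b) a c) ∧
    (∀ a ∈ scClosure β, ∀ b ∈ scClosure β,
      Relation.TransGen (fun a b : Binf => ∃ x ∈ scClosure β, sc a x = b) a b ∨
      a = b ∨
      Relation.TransGen (fun a b : Binf => ∃ x ∈ scClosure β, sc a x = b) b a) ∧
    (∀ a ∈ scClosure β, ∀ b ∈ scClosure β,
      Relation.TransGen (fun a b : Binf => ∃ x ∈ scClosure β, sc a x = b) a (sc a b)) ∧
    (∀ a ∈ scClosure β, ∀ b ∈ scClosure β, ∀ c ∈ scClosure β,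
      (Relation.TransGen (fun a b : Binf => ∃ x ∈ scClosure β, sc a x = b) b c ↔
       Relation.TransGen (fun a b : Binf => ∃ x ∈ scClosure β, sc a x = b)
         (sc a b) (sc a c))) := by
  classical
  have lin : ∀ a ∈ scClosure β, ∀ b ∈ scClosure β,
      Relation.TransGen (fun a b : Binf => ∃ x ∈ scClosure β, sc a x = b) a b ∨
      a = b ∨
      Relation.TransGen (fun a b : Binf => ∃ x ∈ scClosure β, sc a x = b) b a := by
    intro a ha b hb
    obtain ⟨s, rfl⟩ := exists_tm ha
    obtain ⟨t, rfl⟩ := exists_tm hb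
    rcases tm_compare β s t with h | ⟨u, h1, h2⟩ | h
    · exact .inl h
    · exact .inr (.inl ((Tm.ev_exp sc sc_ld β h1).trans (Tm.ev_exp sc sc_ld β h2).symm))
    · exact .inr (.inr h)
  refine ⟨?_, fun a _ => transGen_irrefl, fun a _ b _ c _ h h' => h.trans h', lin,
    fun a _ b hb => .single ⟨b, hb, rfl⟩, ?_⟩
  · intro S' _ a'
    have key : ∃ φ : Binf → S', ∀ t : Tm, φ (t.ev sc β) = t.ev Shelf.act a' := by
      refine ⟨fun x => if h : ∃ t : Tm, t.ev sc β = x then h.choose.ev Shelf.act a' else a', ?_⟩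
      intro t
      have h : ∃ s : Tm, s.ev sc β = t.ev sc β := ⟨t, rfl⟩
      simp only [dif_pos h]
      exact ev_unique β h.choose_spec a'
    obtain ⟨φ, hφ⟩ := key
    refine ⟨φ, hφ .x, ?_⟩
    intro x hx y hy
    obtain ⟨s, rfl⟩ := exists_tm hx
    obtain ⟨t, rfl⟩ := exists_tm hy
    rw [hφ, hφ]
    exact hφ (.nd s t)
  · intro a ha b hb c hc
    refine ⟨sc_mono ha, fun h => ?_⟩
    rcases lin b hb c hc with h' | rfl | h'
    · exact h'
    · exact absurd h transGen_irrefl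
    · exact absurd (h.trans (sc_mono ha h')) transGen_irrefl
end

section
/- Division in a free monogenerated left-shelf has no cycle: let (S, ▷) be a left-shelf generated by a single element g, and suppose S is free based on g, meaning that for every left-shelf (S', ▷') and every g' ∈ S' there exists a map φ : S → S' with φ(g) = g' and φ(a ▷ b) = φ(a) ▷' φ(b) for all a, b ∈ S. Then there is no a ∈ S with a ⊏* a; that is, ⊏* is irreflexive on S. -/
/-- The division relation of a left-shelf: `a ⊏ b` iff `a ▷ x = b` for some `x`. -/
def shelfDiv {S : Type*} [Shelf S] (a b : S) : Prop := ∃ x, Shelf.act a x = b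

universe v

namespace LDAcyclic

/-- The free group on countably many generators. -/
abbrev F : Type := FreeGroup ℕ

/-- The shift endomorphism. -/
def s : F →* F := FreeGroup.map Nat.succ

/-- Shift of an endomorphism. -/
def shHom (φ : F →* F) : F →* F :=
  FreeGroup.lift (fun n => Nat.casesOn n (FreeGroup.of 0) (fun k => s (φ (FreeGroup.of k))))

lemma s_of (n : ℕ) : s (FreeGroup.of n) = FreeGroup.of (n + 1) := by
  simp [s]

lemma shHom_zero (φ : F →* F) : shHom φ (FreeGroup.of 0) = FreeGroup.of 0 := by
  simp [shHom]

lemma shHom_succ (φ : F →* F) (n : ℕ) :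
    shHom φ (FreeGroup.of (n + 1)) = s (φ (FreeGroup.of n)) := by
  simp [shHom]

lemma shHom_s (φ : F →* F) (w : F) : shHom φ (s w) = s (φ w) := by
  have : (shHom φ).comp s = s.comp φ := by
    ext n
    simp [s_of, shHom_succ]
  exact DFunLike.congr_fun this w

lemma shHom_comp (φ ψ : F →* F) : shHom (φ.comp ψ) = (shHom φ).comp (shHom ψ) := by
  ext n
  cases n with
  | zero => simp [shHom_zero]
  | succ n => simp [shHom_succ, shHom_s]

lemma shHom_id : shHom (MonoidHom.id F) = MonoidHom.id F := by
  ext n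
  cases n with
  | zero => simp [shHom_zero]
  | succ n => simp [shHom_succ, s_of]

/-- Shift of automorphisms. -/
def sh : MulAut F →* MulAut F where
  toFun φ := MonoidHom.toMulEquiv (shHom φ.toMonoidHom) (shHom φ.symm.toMonoidHom)
    (by rw [← shHom_comp, ← shHom_id]; congr 1; ext; simp)
    (by rw [← shHom_comp, ← shHom_id]; congr 1; ext; simp)
  map_one' := by
    ext w
    exact DFunLike.congr_fun shHom_id w
  map_mul' φ ψ := by
    ext w
    exact DFunLike.congr_fun (shHom_comp φ.toMonoidHom ψ.toMonoidHom) w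

lemma sh_zero (φ : MulAut F) : sh φ (FreeGroup.of 0) = FreeGroup.of 0 :=
  shHom_zero φ.toMonoidHom

lemma sh_s (φ : MulAut F) (w : F) : sh φ (s w) = s (φ w) := shHom_s φ.toMonoidHom w

lemma sh_succ (φ : MulAut F) (n : ℕ) :
    sh φ (FreeGroup.of (n + 1)) = s (φ (FreeGroup.of n)) := shHom_succ φ.toMonoidHom n

/-- Artin generator as a homomorphism. -/
def sigHom : F →* F := FreeGroup.lift (fun n => match n with
  | 0 => FreeGroup.of 0 * FreeGroup.of 1 * (FreeGroup.of 0)⁻¹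
  | 1 => FreeGroup.of 0
  | (n + 2) => FreeGroup.of (n + 2))

/-- Inverse of the Artin generator. -/
def sigInv : F →* F := FreeGroup.lift (fun n => match n with
  | 0 => FreeGroup.of 1
  | 1 => (FreeGroup.of 1)⁻¹ * FreeGroup.of 0 * FreeGroup.of 1
  | (n + 2) => FreeGroup.of (n + 2))

/-- Artin generator. -/
def sig : MulAut F := MonoidHom.toMulEquiv sigHom sigInv
  (by ext n; rcases n with _ | _ | n <;> simp [sigHom, sigInv, mul_assoc])
  (by ext n; rcases n with _ | _ | n <;> simp [sigHom, sigInv, mul_assoc])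

lemma sig_zero : sig (FreeGroup.of 0) =
    FreeGroup.of 0 * FreeGroup.of 1 * (FreeGroup.of 0)⁻¹ := by
  change sigHom (FreeGroup.of 0) = _
  simp [sigHom]
lemma sig_one : sig (FreeGroup.of 1) = FreeGroup.of 0 := by
  change sigHom (FreeGroup.of 1) = _
  simp [sigHom]
lemma sig_two (n : ℕ) : sig (FreeGroup.of (n + 2)) = FreeGroup.of (n + 2) := by
  change sigHom (FreeGroup.of (n + 2)) = _
  simp [sigHom]

lemma sig_ss (w : F) : sig (s (s w)) = s (s w) := by
  have : (sig.toMonoidHom.comp s).comp s = s.comp s := by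
    ext n
    simp [s_of, sig_two]
  exact DFunLike.congr_fun this w

lemma aut_ext {φ ψ : MulAut F} (h : ∀ n, φ (FreeGroup.of n) = ψ (FreeGroup.of n)) : φ = ψ := by
  have : φ.toMonoidHom = ψ.toMonoidHom := by
    ext n
    exact h n
  ext w
  exact DFunLike.congr_fun this w

lemma sig_comm (φ : MulAut F) : sig * sh (sh φ) = sh (sh φ) * sig := by
  have h1 : sh (sh φ) (FreeGroup.of 1) = FreeGroup.of 1 := by
    rw [sh_succ, sh_zero, s_of]
  apply aut_ext
  intro n
  rcases n with _ | _ | n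
  · simp [sh_zero, sig_zero, h1]
  · simp [sh_zero, sig_one, h1]
  · simp only [MulAut.mul_apply, sig_two]
    rw [sh_succ, sh_succ, sig_ss]

lemma braid : sig * sh sig * sig = sh sig * sig * sh sig := by
  have h1 : sh sig (FreeGroup.of 1) =
    FreeGroup.of 1 * FreeGroup.of 2 * (FreeGroup.of 1)⁻¹ := by
    rw [sh_succ, sig_zero]; simp [s_of]
  have h2 : sh sig (FreeGroup.of 2) = FreeGroup.of 1 := by
    rw [sh_succ, sig_one]; simp [s_of]
  have h3 : ∀ n, sh sig (FreeGroup.of (n + 3)) = FreeGroup.of (n + 3) := by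
    intro n
    rw [sh_succ, sig_two]; simp [s_of]
  have h4 := sig_two 0
  have h5 := fun n => sig_two (n + 1)
  simp only [zero_add, add_assoc] at h4 h5
  norm_num at h5
  apply aut_ext
  intro n
  rcases n with _ | _ | _ | n
  · simp [sh_zero, sig_zero, sig_one, h1, h2, h4, mul_assoc]
  · simp [sh_zero, sig_zero, sig_one, h1, h2, h4, mul_assoc]
  · simp [sh_zero, sig_zero, sig_one, h1, h2, h4, mul_assoc]
  · simp [h3, h5, add_assoc]

/-- The bracket operation. -/
def act (x y : MulAut F) : MulAut F := x * sh y * sig * (sh x)⁻¹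

lemma act_ld (x y z : MulAut F) : act x (act y z) = act (act x y) (act x z) := by
  simp only [act, map_mul, map_inv, mul_inv_rev, inv_inv]
  have hz : sig * sh (sh z) = sh (sh z) * sig := sig_comm z
  have hx : (sh (sh x))⁻¹ * sig = sig * (sh (sh x))⁻¹ := by
    rw [inv_mul_eq_iff_eq_mul, ← mul_assoc, ← sig_comm, mul_inv_cancel_right]
  have hy : (sh (sh y))⁻¹ * sig = sig * (sh (sh y))⁻¹ := by
    rw [inv_mul_eq_iff_eq_mul, ← mul_assoc, ← sig_comm, mul_inv_cancel_right]
  have hb : sig * sh sig * sig * (sh sig)⁻¹ = sh sig * sig := by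
    rw [braid, mul_inv_cancel_right]
  calc _ = x * sh y * sh (sh z) * sh sig * ((sh (sh y))⁻¹ * sig) * (sh x)⁻¹ := by group
    _ = x * sh y * sh (sh z) * (sh sig * sig) * (sh (sh y))⁻¹ * (sh x)⁻¹ := by rw [hy]; group
    _ = x * sh y * (sh (sh z) * sig) * sh sig * sig * (sh sig)⁻¹
          * (sh (sh y))⁻¹ * (sh x)⁻¹ := by rw [← hb]; group
    _ = x * sh y * sig * sh (sh z) * sh sig * (sig * (sh (sh x))⁻¹) * sh (sh x) * (sh sig)⁻¹
          * (sh (sh y))⁻¹ * (sh x)⁻¹ := by rw [← hz]; group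
    _ = _ := by rw [← hx]; group

/-- Elements whose reduced word starts with the generator `0`. -/
def E (w : F) : Prop := ∃ r, w.toWord = (0, true) :: r

/-- Shape of the image under `sig` of a reduced word. -/
def P (L W : List (ℕ × Bool)) : Prop := match L with
  | [] => W = []
  | (0, true) :: _ => ∃ r, W = (0, true) :: (1, true) :: r
  | (0, false) :: _ => ∃ r, W = (0, true) :: (1, false) :: r
  | (1, true) :: _ => W = [(0, true)] ∨
      ∃ n b r, n ≠ 1 ∧ (n = 0 → b = true) ∧ W = (0, true) :: (n, b) :: r
  | (1, false) :: _ => ∃ r, W = (0, false) :: r ∨ W = (1, true) :: r ∨ W = (1, false) :: r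
  | (n + 2, b) :: _ => ∃ r, W = (n + 2, b) :: r

/-- Image of a letter. -/
def img (a : ℕ × Bool) : List (ℕ × Bool) := match a with
  | (0, true) => [(0, true), (1, true), (0, false)]
  | (0, false) => [(0, true), (1, false), (0, false)]
  | (1, b) => [(0, b)]
  | (n + 2, b) => [(n + 2, b)]

lemma mk_false (n : ℕ) : FreeGroup.mk [(n, false)] = (FreeGroup.of n)⁻¹ := rfl
lemma mk_true (n : ℕ) : FreeGroup.mk [(n, true)] = (FreeGroup.of n) := rfl

lemma sig_img (a : ℕ × Bool) : sig (FreeGroup.mk [a]) = FreeGroup.mk (img a) := by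
  obtain ⟨n, b⟩ := a
  rcases n with _ | _ | n <;> cases b <;>
    simp only [mk_true, mk_false, map_inv, sig_zero, sig_one, sig_two, img, zero_add] <;> rfl

lemma sig_word (a : ℕ × Bool) (L : List (ℕ × Bool)) :
    (sig (FreeGroup.mk (a :: L))).toWord =
      FreeGroup.reduce (img a ++ (sig (FreeGroup.mk L)).toWord) := by
  have : FreeGroup.mk (a :: L) = FreeGroup.mk [a] * FreeGroup.mk L := rfl
  rw [this, map_mul, sig_img, FreeGroup.toWord_mul, FreeGroup.toWord_mk,
    ← FreeGroup.reduce_toWord (sig (FreeGroup.mk L)), FreeGroup.reduce_append_reduce_reduce]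
  simp

lemma P_step (a : ℕ × Bool) (L W : List (ℕ × Bool)) (hL : FreeGroup.IsReduced (a :: L))
    (hW : FreeGroup.reduce W = W) (h : P L W) : P (a :: L) (FreeGroup.reduce (img a ++ W)) := by
  obtain ⟨n, b⟩ := a
  rcases L with _ | ⟨⟨m, c⟩, L⟩
  · simp only [P] at h
    subst h
    rcases n with _ | _ | n <;> cases b <;> simp [P, img]
  · rw [FreeGroup.isReduced_cons_cons] at hL
    have hL := hL.1
    rcases m with _ | _ | m <;> cases c <;> simp only [P] at h
    case zero.false | zero.true | succ.succ.false | succ.succ.true =>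
      obtain ⟨r, h⟩ := h
      rcases n with _ | _ | n <;> cases b <;> simp at hL <;>
        simp only [img, List.cons_append, List.nil_append, FreeGroup.reduce.cons, hW] <;>
        simp_all [P]
    case succ.zero.true =>
      rcases h with h | ⟨k, d, r, hk, hd, h⟩
      · rcases n with _ | _ | n <;> cases b <;> simp at hL <;>
          simp only [img, List.cons_append, List.nil_append, FreeGroup.reduce.cons, hW] <;>
          simp_all [P]
      · have hk' := hk.symm
        rcases n with _ | _ | n <;> cases b <;> simp at hL <;>
          simp only [img, List.cons_append, List.nil_append, FreeGroup.reduce.cons, hW] <;>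
          simp_all [P]
    case succ.zero.false =>
      obtain ⟨r, h | h | h⟩ := h <;>
      rcases n with _ | _ | n <;> cases b <;> simp at hL <;>
        simp only [img, List.cons_append, List.nil_append, FreeGroup.reduce.cons, hW] <;>
        simp_all [P]

lemma P_all (L : List (ℕ × Bool)) (hL : FreeGroup.IsReduced L) :
    P L (sig (FreeGroup.mk L)).toWord := by
  induction L with
  | nil =>
    have : FreeGroup.mk ([] : List (ℕ × Bool)) = 1 := rfl
    simp [P, this]
  | cons a L ih =>
    rw [sig_word]
    exact P_step a L _ hL (FreeGroup.reduce_toWord _) (ih (hL.infix ⟨[a], [], by simp⟩))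

lemma E_sig {w : F} (h : E w) : E (sig w) := by
  obtain ⟨r, hr⟩ := h
  have := P_all w.toWord FreeGroup.isReduced_toWord
  rw [FreeGroup.mk_toWord, hr] at this
  obtain ⟨r, hr⟩ := this
  exact ⟨_, hr⟩

/-- Free product normal forms for `F = ⟨x₀⟩ * s F`. -/
inductive D : Option Bool → F → Prop
  | base (u : F) : D none (s u)
  | letter (b : Bool) (e : Option Bool) (w : F) : D e w → e ≠ some (!b) →
      D (some b) (FreeGroup.mk [(0, b)] * w)
  | shift (u : F) (b : Bool) (w : F) : u ≠ 1 → D (some b) w → D none (s u * w)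

lemma D_mul (a : ℕ × Bool) (w : F) (h : ∃ e, D e w) : ∃ e, D e (FreeGroup.mk [a] * w) := by
  obtain ⟨e, h⟩ := h
  obtain ⟨n, b⟩ := a
  rcases n with _ | n
  · by_cases he : e = some (!b)
    · subst he
      cases h with
      | letter _ e' w' h' he' =>
        refine ⟨e', ?_⟩
        have : FreeGroup.mk [(0, b)] * (FreeGroup.mk [(0, !b)] * w') = w' := by
          cases b <;> simp [mk_true, mk_false]
        rwa [this]
    · exact ⟨_, D.letter b e w h he⟩
  · have hs : FreeGroup.mk [(n + 1, b)] = s (FreeGroup.mk [(n, b)]) := rfl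
    rw [hs]
    have key : ∀ b' w', D (some b') w' → ∀ u, ∃ e, D e (s u * w') := by
      intro b' w' h u
      by_cases hu : u = 1
      · subst hu
        exact ⟨some b', by simpa using h⟩
      · exact ⟨_, D.shift u b' w' hu h⟩
    cases h with
    | base u => exact ⟨none, by rw [← map_mul]; exact D.base _⟩
    | letter b' e' w' h' he' => exact key b' _ (D.letter b' e' w' h' he') _
    | shift u b' w' hu h' =>
      rw [← mul_assoc, ← map_mul]
      exact key b' w' h' _

lemma D_ex (w : F) : ∃ e, D e w := by
  rw [← FreeGroup.mk_toWord (x := w)]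
  induction w.toWord with
  | nil => exact ⟨none, by have := D.base 1; rw [map_one] at this; exact this⟩
  | cons a L ih => exact D_mul a _ ih

lemma D_sh (φ : MulAut F) {e : Option Bool} {w : F} (h : D e w) : D e (sh φ w) := by
  induction h with
  | base u => rw [sh_s]; exact D.base _
  | letter b e w h he ih =>
    have : sh φ (FreeGroup.mk [(0, b)]) = FreeGroup.mk [(0, b)] := by
      cases b <;> simp [mk_true, mk_false, sh_zero]
    rw [map_mul, this]
    exact D.letter b e _ ih he
  | shift u b w hu h ih =>
    rw [map_mul, sh_s]
    exact D.shift _ b _ (by simpa using hu) ih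

/-- The marker of the first letter of a word. -/
def mark (L : List (ℕ × Bool)) : Option Bool := match L with
  | (0, b) :: _ => some b
  | _ => none

lemma toWord_s (u : F) : (s u).toWord = u.toWord.map (fun p => (p.1 + 1, p.2)) := by
  have h : FreeGroup.IsReduced (u.toWord.map (fun p => (p.1 + 1, p.2))) := by
    have := FreeGroup.isReduced_toWord (x := u)
    unfold FreeGroup.IsReduced at *
    rw [List.isChain_map]
    simpa using this
  rw [← h.reduce_eq, ← FreeGroup.toWord_mk]
  congr 1
  conv_lhs => rw [← FreeGroup.mk_toWord (x := u)]
  rfl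

lemma D_mark {e : Option Bool} {w : F} (h : D e w) : mark w.toWord = e := by
  induction h with
  | base u =>
    rw [toWord_s]
    rcases u.toWord with _ | ⟨⟨n, b⟩, L⟩ <;> simp [mark]
  | letter b e w h he ih =>
    have : (FreeGroup.mk [(0, b)] * w).toWord = FreeGroup.reduce ((0, b) :: w.toWord) := by
      rw [FreeGroup.toWord_mul]; rfl
    rw [this, FreeGroup.reduce.cons, FreeGroup.reduce_toWord]
    rcases hw : w.toWord with _ | ⟨⟨n, c⟩, L⟩
    · simp [mark]
    · rw [hw] at ih
      rcases n with _ | n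
      · simp only [mark] at ih
        subst ih
        have : b = c := by cases b <;> cases c <;> simp_all
        subst this
        simp [mark]
      · simp [mark]
  | shift u b w hu h ih =>
    have hu' : u.toWord ≠ [] := by simpa using hu
    have hred : FreeGroup.IsReduced ((s u).toWord ++ w.toWord) := by
      unfold FreeGroup.IsReduced
      rw [List.isChain_append]
      refine ⟨FreeGroup.isReduced_toWord, FreeGroup.isReduced_toWord, ?_⟩
      rw [toWord_s]
      intro x hx y hy hxy
      exfalso
      rcases hw : w.toWord with _ | ⟨⟨n, c⟩, L⟩
      · simp [hw] at hy
      · rcases n with _ | n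
        · simp [hw] at hy
          have hx' := List.mem_of_mem_getLast? hx
          simp at hx'
          subst hy
          rcases hx' with ⟨a, ⟨_, rfl⟩ | ⟨_, rfl⟩⟩ <;> simp at hxy
        · simp [hw, mark] at ih
    rw [FreeGroup.toWord_mul, hred.reduce_eq, toWord_s]
    rcases hq : u.toWord with _ | ⟨⟨n, b⟩, L⟩
    · exact absurd hq hu'
    · simp [mark]

lemma E_sh (φ : MulAut F) {w : F} (h : E w) : E (sh φ w) := by
  obtain ⟨r, hr⟩ := h
  obtain ⟨e, he⟩ := D_ex w
  have h1 := D_mark he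
  have h2 := D_mark (D_sh φ he)
  rw [hr] at h1
  simp only [mark] at h1
  subst h1
  unfold E
  rcases hq : (sh φ w).toWord with _ | ⟨⟨n, b⟩, L⟩
  · simp [hq, mark] at h2
  · rcases n with _ | n
    · simp [hq, mark] at h2
      exact ⟨L, by rw [h2]⟩
    · simp [hq, mark] at h2

/-- Positive automorphisms. -/
def Pos (p : MulAut F) : Prop := E (p (FreeGroup.of 0)⁻¹) ∧ ∀ w, E w → E (p w)

lemma Pos.mul {p q : MulAut F} (hp : Pos p) (hq : Pos q) : Pos (p * q) :=
  ⟨hp.2 _ hq.1, fun w hw => hp.2 _ (hq.2 w hw)⟩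

lemma pos_basic (x y : MulAut F) : Pos (sh y * sig * (sh x)⁻¹) := by
  rw [← map_inv]
  constructor
  · simp only [MulAut.mul_apply, map_inv, sh_zero]
    rw [← map_inv (sh y)]
    apply E_sh
    rw [← map_inv sh, sh_zero, sig_zero]
    exact ⟨_, rfl⟩
  · intro w hw
    exact E_sh _ (E_sig (E_sh _ hw))

lemma not_pos_one : ¬ Pos 1 := by
  rintro ⟨⟨r, hr⟩, -⟩
  have : (FreeGroup.of 0 : F)⁻¹.toWord = [(0, false)] := rfl
  simp [this] at hr

/-- The shelf structure on automorphisms, in any universe. -/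
structure Sh : Type v where
  /-- the automorphism -/
  val : ULift.{v} (MulAut F)

instance : Shelf Sh.{v} where
  act x y := ⟨⟨act x.val.down y.val.down⟩⟩
  self_distrib := by
    intro x y z
    simp only [act_ld x.val.down y.val.down z.val.down]

lemma pos_act (x y : Sh.{v}) : Pos (x.val.down⁻¹ * (Shelf.act x y).val.down) := by
  have : x.val.down⁻¹ * (Shelf.act x y).val.down =
      sh y.val.down * sig * (sh x.val.down)⁻¹ := by
    show x.val.down⁻¹ * act x.val.down y.val.down = _
    simp [act, mul_assoc]
  rw [this]
  exact pos_basic _ _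

end LDAcyclic

/-- division in a free monogenerated left-shelf has no cycle:
if `S` is generated by `g` and free based on `g`, then `⊏*` is irreflexive. -/
theorem free_shelf_division_acyclic {S : Type*} [Shelf S] (g : S)
    (hgen : ∀ P : S → Prop, P g →
      (∀ a b, P a → P b → P (Shelf.act a b)) → ∀ a, P a)
    (hfree : ∀ (S' : Type v) [Shelf S'] (g' : S'),
      ∃ φ : S → S', φ g = g' ∧
        ∀ a b : S, φ (Shelf.act a b) = Shelf.act (φ a) (φ b)) :
    ∀ a : S, ¬ Relation.TransGen shelfDiv a a := by
  intro a ha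
  obtain ⟨φ, -, hφ⟩ := hfree LDAcyclic.Sh.{v} ⟨⟨1⟩⟩
  have step : ∀ b c : S, shelfDiv b c →
      LDAcyclic.Pos ((φ b).val.down⁻¹ * (φ c).val.down) := by
    rintro b c ⟨x, rfl⟩
    rw [hφ]
    exact LDAcyclic.pos_act _ _
  have key : ∀ b : S, Relation.TransGen (@shelfDiv S _) a b →
      LDAcyclic.Pos ((φ a).val.down⁻¹ * (φ b).val.down) := by
    intro b hb
    induction hb with
    | single h => exact step _ _ h
    | tail _ h ih =>
      have := ih.mul (step _ _ h)
      simpa [mul_assoc] using this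
  have := key a ha
  rw [inv_mul_cancel] at this
  exact LDAcyclic.not_pos_one this
end

section
/- Special braids are closed under left division: if β and γ are special braids and β' ∈ B_∞ satisfies β ▷ β' = γ, then β' is special. -/
/-- The set of special braids: the smallest subset of `Binf` containing the
unit braid and closed under the shifted-conjugation operation `sc`. -/
def Special : Set Binf :=
  {x | ∀ P : Binf → Prop, P 1 → (∀ a b, P a → P b → P (sc a b)) → P x}


namespace LDB

/-- Terms in one variable. -/
inductive Tm : Type
  | x : Tm
  | app : Tm → Tm → Tm

local infixl:70 "∙" => Tm.app

/-- One step of LD-expansion. -/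
inductive Step : Tm → Tm → Prop
  | root (a b c : Tm) : Step (a ∙ (b ∙ c)) ((a ∙ b) ∙ (a ∙ c))
  | left {a a' : Tm} (b : Tm) : Step a a' → Step (a ∙ b) (a' ∙ b)
  | right (a : Tm) {b c : Tm} : Step b c → Step (a ∙ b) (a ∙ c)

/-- LD-expansion. -/
abbrev Exp : Tm → Tm → Prop := Relation.ReflTransGen Step

/-- LD-equivalence. -/
abbrev Eqv : Tm → Tm → Prop := Relation.EqvGen Step

local infix:50 "≈ᵈ" => Eqv

lemma Exp.left {a a' : Tm} (b : Tm) (h : Exp a a') : Exp (a ∙ b) (a' ∙ b) := by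
  induction h with
  | refl => exact .refl
  | tail _ h2 ih => exact ih.tail (Step.left b h2)

lemma Exp.right (a : Tm) {b b' : Tm} (h : Exp b b') : Exp (a ∙ b) (a ∙ b') := by
  induction h with
  | refl => exact .refl
  | tail _ h2 ih => exact ih.tail (Step.right a h2)

lemma Exp.app {a a' b b' : Tm} (h : Exp a a') (h' : Exp b b') : Exp (a ∙ b) (a' ∙ b') :=
  (h.left b).trans (h'.right a')

lemma Eqv.rfl' (a : Tm) : a ≈ᵈ a := .refl a

lemma Eqv.symm' {a b : Tm} (h : a ≈ᵈ b) : b ≈ᵈ a := .symm _ _ h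

lemma Eqv.trans' {a b c : Tm} (h : a ≈ᵈ b) (h' : b ≈ᵈ c) : a ≈ᵈ c := .trans _ _ _ h h'

lemma Eqv.left {a a' : Tm} (b : Tm) (h : a ≈ᵈ a') : a ∙ b ≈ᵈ a' ∙ b := by
  induction h with
  | rel _ _ h => exact .rel _ _ (Step.left b h)
  | refl _ => exact .refl _
  | symm _ _ _ ih => exact .symm _ _ ih
  | trans _ _ _ _ _ ih1 ih2 => exact .trans _ _ _ ih1 ih2

lemma Eqv.right (a : Tm) {b b' : Tm} (h : b ≈ᵈ b') : a ∙ b ≈ᵈ a ∙ b' := by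
  induction h with
  | rel _ _ h => exact .rel _ _ (Step.right a h)
  | refl _ => exact .refl _
  | symm _ _ _ ih => exact .symm _ _ ih
  | trans _ _ _ _ _ ih1 ih2 => exact .trans _ _ _ ih1 ih2

lemma Eqv.app {a a' b b' : Tm} (h : a ≈ᵈ a') (h' : b ≈ᵈ b') : a ∙ b ≈ᵈ a' ∙ b' :=
  (h.left b).trans' (h'.right a')

lemma Eqv.ld (a b c : Tm) : a ∙ (b ∙ c) ≈ᵈ (a ∙ b) ∙ (a ∙ c) := .rel _ _ (Step.root a b c)

lemma Exp.eqv {a b : Tm} (h : Exp a b) : a ≈ᵈ b := by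
  induction h with
  | refl => exact .refl _
  | tail _ h2 ih => exact ih.trans' (.rel _ _ h2)

/-- Distribute `s` to the leaves of `t`. -/
def star (s : Tm) : Tm → Tm
  | .x => s ∙ .x
  | .app a b => star s a ∙ star s b

/-- The fundamental expansion. -/
def bd : Tm → Tm
  | .x => .x
  | .app a b => star (bd a) (bd b)

lemma app_star (s t : Tm) : Exp (s ∙ t) (star s t) := by
  induction t with
  | x => exact .refl
  | app a b iha ihb => exact Relation.ReflTransGen.head (Step.root s a b) (Exp.app iha ihb)

lemma star_left {s s' : Tm} (h : Exp s s') (t : Tm) : Exp (star s t) (star s' t) := by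
  induction t with
  | x => exact h.left _
  | app a b iha ihb => exact Exp.app iha ihb

lemma star_right_step (s : Tm) {t t' : Tm} (h : Step t t') : Exp (star s t) (star s t') := by
  induction h with
  | root a b c => exact .single (Step.root _ _ _)
  | left b _ ih => exact ih.left _
  | right a _ ih => exact ih.right _

lemma star_right (s : Tm) {t t' : Tm} (h : Exp t t') : Exp (star s t) (star s t') := by
  induction h with
  | refl => exact .refl
  | tail _ h2 ih => exact ih.trans (star_right_step s h2)

lemma star_mono {s s' t t' : Tm} (h : Exp s s') (h' : Exp t t') :
    Exp (star s t) (star s' t') :=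
  (star_left h t).trans (star_right s' h')

lemma star_star (s a b : Tm) : Exp (star s (star a b)) (star (star s a) (star s b)) := by
  induction b with
  | x => exact app_star (star s a) (s ∙ .x)
  | app b1 b2 ih1 ih2 => exact Exp.app ih1 ih2

lemma exp_bd (t : Tm) : Exp t (bd t) := by
  induction t with
  | x => exact .refl
  | app a b iha ihb => exact (Exp.app iha ihb).trans (app_star _ _)

lemma step_bd {t t' : Tm} (h : Step t t') : Exp t' (bd t) := by
  induction h with
  | root a b c =>
    have h1 : Exp (a ∙ b) (star (bd a) (bd b)) :=
      (Exp.app (exp_bd a) (exp_bd b)).trans (app_star _ _)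
    have h2 : Exp (a ∙ c) (star (bd a) (bd c)) :=
      (Exp.app (exp_bd a) (exp_bd c)).trans (app_star _ _)
    exact (Exp.app h1 h2).trans (star_right (bd a) (app_star (bd b) (bd c)))
  | left b _ ih => exact (Exp.app ih (exp_bd b)).trans (app_star _ _)
  | right a _ ih => exact (Exp.app (exp_bd a) ih).trans (app_star _ _)

lemma bd_step {t t' : Tm} (h : Step t t') : Exp (bd t) (bd t') := by
  induction h with
  | root a b c => exact star_star _ _ _
  | left b _ ih => exact star_left ih _
  | right a _ ih => exact star_right _ ih

lemma bd_mono {t t' : Tm} (h : Exp t t') : Exp (bd t) (bd t') := by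
  induction h with
  | refl => exact .refl
  | tail _ h2 ih => exact ih.trans (bd_step h2)

lemma bd_iter_mono (K : ℕ) {t t' : Tm} (h : Exp t t') : Exp (bd^[K] t) (bd^[K] t') := by
  induction K generalizing t t' with
  | zero => exact h
  | succ n ih => exact ih (bd_mono h)

lemma bd_iter_eqv (K : ℕ) (t : Tm) : t ≈ᵈ bd^[K] t := by
  induction K generalizing t with
  | zero => exact .refl _
  | succ n ih => exact (exp_bd t).eqv.trans' (ih (bd t))

lemma exp_bd_iter (K : ℕ) (t : Tm) : Exp t (bd^[K] t) := by
  induction K generalizing t with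
  | zero => exact .refl
  | succ n ih => exact (exp_bd t).trans (ih (bd t))

lemma eqv_exp {t t' : Tm} (h : t ≈ᵈ t') : (∃ K, Exp t (bd^[K] t')) ∧ ∃ K, Exp t' (bd^[K] t) := by
  induction h with
  | rel _ _ h => exact ⟨⟨0, .single h⟩, ⟨1, step_bd h⟩⟩
  | refl _ => exact ⟨⟨0, .refl⟩, ⟨0, .refl⟩⟩
  | symm _ _ _ ih => exact ih.symm
  | trans a b c _ _ ih1 ih2 =>
    obtain ⟨⟨K1, h1⟩, ⟨L1, g1⟩⟩ := ih1
    obtain ⟨⟨K2, h2⟩, ⟨L2, g2⟩⟩ := ih2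
    refine ⟨⟨K1 + K2, ?_⟩, ⟨L2 + L1, ?_⟩⟩
    · rw [Function.iterate_add_apply]
      exact h1.trans (bd_iter_mono K1 h2)
    · rw [Function.iterate_add_apply]
      exact g2.trans (bd_iter_mono L2 g1)

/-- Improper iterated left subterm. -/
inductive LS : Tm → Tm → Prop
  | refl (t : Tm) : LS t t
  | left {w a : Tm} (b : Tm) : LS w a → LS w (a ∙ b)

lemma LS.step {t t' : Tm} (h : Step t t') : ∀ {u : Tm}, LS u t → ∃ v, LS v t' ∧ v ≈ᵈ u := by
  induction h with
  | root a b c =>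
    intro u hu
    cases hu with
    | refl => exact ⟨_, .refl _, .symm' (.ld a b c)⟩
    | left _ h => exact ⟨u, .left _ (.left _ h), .refl _⟩
  | left b hs ih =>
    intro u hu
    cases hu with
    | refl => exact ⟨_, .refl _, .symm' (.rel _ _ (Step.left b hs))⟩
    | left _ h =>
      obtain ⟨v, hv, e⟩ := ih h
      exact ⟨v, .left _ hv, e⟩
  | right a hs ih =>
    intro u hu
    cases hu with
    | refl => exact ⟨_, .refl _, .symm' (.rel _ _ (Step.right a hs))⟩
    | left _ h => exact ⟨u, .left _ h, .refl _⟩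

lemma LS.exp {t t' u : Tm} (h : Exp t t') (hu : LS u t) : ∃ v, LS v t' ∧ v ≈ᵈ u := by
  induction h with
  | refl => exact ⟨u, hu, .refl _⟩
  | tail _ h2 ih =>
    obtain ⟨v, hv, e⟩ := ih
    obtain ⟨v2, hv2, e2⟩ := LS.step h2 hv
    exact ⟨v2, hv2, e2.trans' e⟩

/-- Right powers. -/
def pw : ℕ → Tm
  | 0 => .x
  | n + 1 => .x ∙ pw n

lemma absorb (u : Tm) : ∃ N, ∀ n, N ≤ n → u ∙ pw n ≈ᵈ pw (n + 1) := by
  induction u with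
  | x => exact ⟨0, fun n _ => .refl _⟩
  | app a b iha ihb =>
    obtain ⟨A, hA⟩ := iha
    obtain ⟨B, hB⟩ := ihb
    refine ⟨A + B + 1, fun n hn => ?_⟩
    obtain ⟨m, rfl⟩ : ∃ m, n = m + 1 := ⟨n - 1, by omega⟩
    have h1 : (a ∙ b) ∙ pw (m + 1) ≈ᵈ (a ∙ b) ∙ (a ∙ pw m) :=
      Eqv.right _ (hA m (by omega)).symm'
    have h2 : (a ∙ b) ∙ (a ∙ pw m) ≈ᵈ a ∙ (b ∙ pw m) := (Eqv.ld a b (pw m)).symm'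
    have h3 : a ∙ (b ∙ pw m) ≈ᵈ a ∙ pw (m + 1) := Eqv.right _ (hB m (by omega))
    exact h1.trans' (h2.trans' (h3.trans' (hA (m + 1) (by omega))))

/-- Left-divisibility preorder. -/
inductive Le : Tm → Tm → Prop
  | refl {a b : Tm} : a ≈ᵈ b → Le a b
  | app {a b c d : Tm} : Le a b → b ∙ c ≈ᵈ d → Le a d

lemma Le.eqv_right {a b b' : Tm} (h : Le a b) (e : b ≈ᵈ b') : Le a b' := by
  cases h with
  | refl h => exact .refl (h.trans' e)
  | app h1 h2 => exact .app h1 (h2.trans' e)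

lemma Le.trans {a b c : Tm} (h : Le a b) (h' : Le b c) : Le a c := by
  induction h' with
  | refl e => exact h.eqv_right e
  | app _ e ih => exact .app ih e

lemma Le.self_app (a b : Tm) : Le a (a ∙ b) := .app (.refl (.refl a)) (.refl _)

lemma Le.x_le (t : Tm) : Le .x t := by
  induction t with
  | x => exact .refl (.refl _)
  | app a b iha _ => exact iha.trans (.self_app a b)

lemma Le.mul (p : Tm) {a b : Tm} (h : Le a b) : Le (p ∙ a) (p ∙ b) := by
  induction h with
  | refl e => exact .refl (e.right p)
  | app _ e ih => exact .app ih ((Eqv.ld _ _ _).symm'.trans' (e.right p))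

lemma LS.le {w t : Tm} (h : LS w t) : Le w t := by
  induction h with
  | refl => exact .refl (.refl _)
  | left b _ ih => exact ih.trans (.self_app _ _)

/-- The auxiliary relation. -/
inductive H (p : Tm) : Tm → Tm → Prop
  | base {y : Tm} : Le y (p ∙ .x) → H p y .x
  | ext {y' y'' e : Tm} : H p y' e → Le (y' ∙ y'') (p ∙ e) → H p (y' ∙ y'') e
  | mul {y' y'' b e : Tm} : y' ≈ᵈ p ∙ b → H p y' b → H p y'' e → H p (y' ∙ y'') (b ∙ e)

lemma star_eqv (s t : Tm) : star s t ≈ᵈ s ∙ t := (app_star s t).eqv.symm'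

lemma bd_eqv (t : Tm) : bd t ≈ᵈ t := (exp_bd t).eqv.symm'

lemma H.star_self (p C : Tm) : H p (star p C) C := by
  induction C with
  | x => exact .base (.refl (.refl _))
  | app a b iha ihb => exact .mul (star_eqv p a) iha ihb

lemma H.star_mul {p q1 q z f : Tm} (e : q1 ≈ᵈ p ∙ q) (hq : H p q1 q) (h : H p z f) :
    H p (star q1 z) (star q f) := by
  have up : ∀ {y g : Tm}, Le y (p ∙ g) → Le (q1 ∙ y) (p ∙ star q g) := by
    intro y g hy
    refine (hy.mul q1).eqv_right ?_
    exact (e.left _).trans' ((Eqv.ld _ _ _).symm'.trans' ((star_eqv q g).symm'.right p))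
  induction h with
  | @base y hy =>
    induction y with
    | x => exact .mul e hq (.base (.x_le _))
    | app a b iha ihb =>
      refine .ext (iha ((Le.self_app a b).trans hy)) ?_
      exact (Le.refl (star_eqv q1 (a ∙ b))).trans (up hy)
  | @ext y' y'' f _ hy ih =>
    exact .ext ih ((Le.refl (star_eqv q1 (y' ∙ y''))).trans (up hy))
  | @mul y' y'' b f he _ _ ih1 ih2 =>
    refine .mul ?_ ih1 ih2
    refine (star_eqv _ _).trans' ((e.app he).trans' ?_)
    exact (Eqv.ld _ _ _).symm'.trans' ((star_eqv q b).symm'.right p)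

lemma H.star_ext {p y e z : Tm} (h : H p y e) (hz : Le (y ∙ z) (p ∙ e)) : H p (star y z) e := by
  induction z with
  | x => exact .ext h hz
  | app a b iha ihb =>
    refine .ext (iha ?_) ((Le.refl (star_eqv y (a ∙ b))).trans hz)
    exact (Le.app (.refl (.refl _)) (Eqv.ld y a b).symm').trans hz

lemma H.bd {p y e : Tm} (h : H p y e) : H p (bd y) (bd e) := by
  induction h with
  | base hy => exact .base ((Le.refl (bd_eqv _)).trans hy)
  | @ext y' y'' e _ hy ih =>
    refine H.star_ext ih ?_
    refine (Le.refl ((bd_eqv y').app (bd_eqv y''))).trans (hy.eqv_right ?_)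
    exact (bd_eqv e).symm'.right p
  | @mul y' y'' b e he _ _ ih1 ih2 =>
    exact H.star_mul ((bd_eqv y').trans' (he.trans' ((bd_eqv b).symm'.right p))) ih1 ih2

lemma H.bd_iter {p : Tm} (K : ℕ) {y e : Tm} (h : H p y e) : H p (LDB.bd^[K] y) (LDB.bd^[K] e) := by
  induction K generalizing y e with
  | zero => exact h
  | succ n ih => exact ih h.bd

/-- The lower bound term. -/
def low (p : Tm) : Tm → Tm
  | .x => .x
  | .app b e => (p ∙ b) ∙ low p e

lemma H.bounds {p y e : Tm} (h : H p y e) : Le (low p e) y ∧ Le y (p ∙ e) := by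
  induction h with
  | base hy => exact ⟨.x_le _, hy⟩
  | ext _ hy ih => exact ⟨ih.1.trans (.self_app _ _), hy⟩
  | @mul y' y'' b e he _ _ ih1 ih2 =>
    refine ⟨(ih2.1.mul (p ∙ b)).eqv_right (he.symm'.left _), ?_⟩
    exact (ih2.2.mul y').eqv_right ((he.left _).trans' (Eqv.ld p b e).symm')

lemma H.cut {p y e : Tm} (h : H p y e) : ∀ {w : Tm}, LS w y →
    ∃ e, Le (low p e) w ∧ Le w (p ∙ e) := by
  induction h with
  | base hy =>
    intro w hw
    exact ⟨.x, .x_le _, hw.le.trans hy⟩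
  | @ext y' y'' e h hy ih =>
    intro w hw
    cases hw with
    | refl => exact ⟨e, (H.ext h hy).bounds⟩
    | left _ hw => exact ih hw
  | @mul y' y'' b e he h1 h2 ih1 ih2 =>
    intro w hw
    cases hw with
    | refl => exact ⟨b ∙ e, (H.mul he h1 h2).bounds⟩
    | left _ hw => exact ih1 hw

theorem cut (w p : Tm) : ∃ e, Le (low p e) w ∧ Le w (p ∙ e) := by
  obtain ⟨A, hA⟩ := absorb w
  obtain ⟨B, hB⟩ := absorb p
  have h1 : w ∙ pw (A + B) ≈ᵈ star p (pw (A + B)) :=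
    (hA _ (by omega)).trans' ((hB (A + B) (by omega)).symm'.trans' (star_eqv _ _).symm')
  obtain ⟨⟨K, hK⟩, -⟩ := eqv_exp h1
  obtain ⟨v, hv, ev⟩ := LS.exp hK (.left _ (.refl w))
  obtain ⟨e, he1, he2⟩ := ((H.star_self p (pw (A + B))).bd_iter K).cut hv
  exact ⟨e, he1.eqv_right ev, (Le.refl ev.symm').trans he2⟩

/-! ### Braid group facts -/

lemma braid_rel (i : ℕ) : σ i * σ (i + 1) * σ i = σ (i + 1) * σ i * σ (i + 1) := by
  have h := mk_rel_eq_one (r := .of i * .of (i + 1) * .of i *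
              (.of (i + 1) * .of i * .of (i + 1))⁻¹) (Or.inr ⟨i, rfl⟩)
  simp only [map_mul, map_inv] at h
  exact mul_inv_eq_one.mp h

lemma braid_comm {i j : ℕ} (hij : i + 2 ≤ j) : σ i * σ j = σ j * σ i := by
  have h := mk_rel_eq_one (r := .of i * .of j * (.of i)⁻¹ * (.of j)⁻¹) (Or.inl ⟨i, j, hij, rfl⟩)
  simp only [map_mul, map_inv] at h
  have h2 := mul_inv_eq_one.mp h
  exact mul_inv_eq_iff_eq_mul.mp h2

lemma Binf_induction {P : Binf → Prop} (h1 : P 1) (hm : ∀ a b, P a → P b → P (a * b))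
    (hi : ∀ a, P a → P a⁻¹) (hg : ∀ i, P (σ i)) (b : Binf) : P b := by
  have hb : b ∈ Subgroup.closure (Set.range (PresentedGroup.of : ℕ → Binf)) := by
    rw [PresentedGroup.closure_range_of]; trivial
  induction hb using Subgroup.closure_induction with
  | mem x hx => obtain ⟨i, rfl⟩ := hx; exact hg i
  | one => exact h1
  | mul x y _ _ hx hy => exact hm x y hx hy
  | inv x _ hx => exact hi x hx

lemma σ0_comm (b : Binf) : σ 0 * sh (sh b) = sh (sh b) * σ 0 := by
  induction b using Binf_induction with
  | h1 => simp
  | hm a b ha hb =>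
    rw [map_mul, map_mul, ← mul_assoc, ha, mul_assoc, hb, mul_assoc]
  | hi a ha =>
    rw [map_inv, map_inv]
    exact (show Commute (σ 0) (sh (sh a)) from ha).inv_right
  | hg i => simpa using braid_comm (i := 0) (j := i + 1 + 1) (by omega)

lemma sc_ld (a b c : Binf) : sc a (sc b c) = sc (sc a b) (sc a c) := by
  have h1 := σ0_comm a
  have h2 := σ0_comm b
  have h3 := σ0_comm c
  have h4 := braid_rel 0
  simp only [sc, map_mul, map_inv, sh_σ, mul_inv_rev, inv_inv, zero_add] at *
  have e3 : (sh (sh a))⁻¹ * σ 0 = σ 0 * (sh (sh a))⁻¹ :=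
    ((show Commute (σ 0) (sh (sh a)) from h1).inv_right).symm
  have e2 : (sh (sh b))⁻¹ * σ 0 = σ 0 * (sh (sh b))⁻¹ :=
    ((show Commute (σ 0) (sh (sh b)) from h2).inv_right).symm
  have e4 : σ 1 * σ 0 * (σ 1)⁻¹ = (σ 0)⁻¹ * (σ 1 * σ 0) := by
    rw [mul_inv_eq_iff_eq_mul, mul_assoc, eq_inv_mul_iff_mul_eq, ← mul_assoc]
    exact h4
  calc a * (sh b * sh (sh c) * σ 1 * (sh (sh b))⁻¹) * σ 0 * (sh a)⁻¹
      = a * sh b * sh (sh c) * σ 1 * ((sh (sh b))⁻¹ * σ 0) * (sh a)⁻¹ := by group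
    _ = a * sh b * (sh (sh c)) * (σ 1 * σ 0) * (sh (sh b))⁻¹ * (sh a)⁻¹ := by rw [e2]; group
    _ = a * sh b * (σ 0 * sh (sh c)) * ((σ 0)⁻¹ * (σ 1 * σ 0)) * (sh (sh b))⁻¹ * (sh a)⁻¹ := by
        rw [h3]; group
    _ = a * sh b * (σ 0 * sh (sh c)) * (σ 1 * σ 0 * (σ 1)⁻¹) * (sh (sh b))⁻¹ * (sh a)⁻¹ := by
        rw [e4]
    _ = a * sh b * σ 0 * sh (sh c) * σ 1 * ((sh (sh a))⁻¹ * sh (sh a)) * σ 0 * (σ 1)⁻¹ *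
          (sh (sh b))⁻¹ * (sh a)⁻¹ := by group
    _ = a * sh b * σ 0 * sh (sh c) * σ 1 * (sh (sh a))⁻¹ * (σ 0 * sh (sh a)) * (σ 1)⁻¹ *
          (sh (sh b))⁻¹ * (sh a)⁻¹ := by rw [h1]; group
    _ = _ := by group

/-- `δ n = σ 0 σ 1 … σ (n-1)`. -/
def δ : ℕ → Binf
  | 0 => 1
  | n + 1 => δ n * σ n

lemma δ_comm {n j : ℕ} (h : n + 1 ≤ j) : δ n * σ j = σ j * δ n := by
  induction n with
  | zero => simp [δ]
  | succ n ih =>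
    rw [δ, mul_assoc, braid_comm (by omega), ← mul_assoc, ih (by omega), mul_assoc]

lemma δ_σ {n i : ℕ} (h : i + 2 ≤ n) : δ n * σ i = σ (i + 1) * δ n := by
  induction n with
  | zero => omega
  | succ n ih =>
    rcases Nat.lt_or_ge (i + 1) n with h' | h'
    · rw [δ, mul_assoc, ← braid_comm (by omega), ← mul_assoc, ih (by omega), mul_assoc]
    · obtain rfl : n = i + 1 := by omega
      have hb := braid_rel i
      have hc := δ_comm (n := i) (j := i + 1) le_rfl
      calc δ (i + 1 + 1) * σ i = δ i * (σ i * σ (i + 1) * σ i) := by simp [δ, mul_assoc]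
        _ = δ i * σ (i + 1) * σ i * σ (i + 1) := by rw [hb]; simp [mul_assoc]
        _ = σ (i + 1) * δ (i + 1 + 1) := by rw [hc]; simp [δ, mul_assoc]

lemma sh_conj (b : Binf) : ∃ N, ∀ n, N ≤ n → δ n * b = sh b * δ n := by
  induction b using Binf_induction with
  | h1 => exact ⟨0, fun n _ => by simp⟩
  | hm a b ha hb =>
    obtain ⟨A, hA⟩ := ha
    obtain ⟨B, hB⟩ := hb
    refine ⟨A + B, fun n hn => ?_⟩
    rw [← mul_assoc, hA n (by omega), mul_assoc, hB n (by omega), map_mul, mul_assoc]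
  | hi a ha =>
    obtain ⟨A, hA⟩ := ha
    refine ⟨A, fun n hn => ?_⟩
    rw [map_inv, mul_inv_eq_iff_eq_mul, mul_assoc, eq_inv_mul_iff_mul_eq]
    exact (hA n hn).symm
  | hg i => exact ⟨i + 2, fun n hn => by rw [δ_σ hn, sh_σ]⟩

lemma sh_injective : Function.Injective sh := by
  rw [injective_iff_map_eq_one]
  intro b hb
  obtain ⟨N, hN⟩ := sh_conj b
  have := hN N le_rfl
  rw [hb, one_mul] at this
  simpa using this

/-! ### The Artin representation -/

abbrev F : Type := FreeGroup ℕ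

/-- Artin images. -/
def artGen (i j : ℕ) : F :=
  if j = i then .of i * .of (i + 1) * (.of i)⁻¹ else if j = i + 1 then .of i else .of j

/-- Inverse Artin images. -/
def artGenInv (i j : ℕ) : F :=
  if j = i then .of (i + 1) else
    if j = i + 1 then (.of (i + 1))⁻¹ * .of i * .of (i + 1) else .of j

/-- The Artin automorphism. -/
def art (i : ℕ) : MulAut F :=
  MonoidHom.toMulEquiv (FreeGroup.lift (artGen i)) (FreeGroup.lift (artGenInv i))
    (by
      ext j
      by_cases h1 : j = i
      · subst h1; simp [artGen, artGenInv]; group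
      · by_cases h2 : j = i + 1
        · subst h2; simp [artGen, artGenInv]
        · simp [artGen, artGenInv, h1, h2])
    (by
      ext j
      by_cases h1 : j = i
      · subst h1; simp [artGen, artGenInv]
      · by_cases h2 : j = i + 1
        · subst h2; simp [artGen, artGenInv]; group
        · simp [artGen, artGenInv, h1, h2])

lemma art_of (i j : ℕ) : art i (.of j) = artGen i j := by
  simp [art]

lemma art_self (i : ℕ) : art i (.of i) = .of i * .of (i + 1) * (.of i)⁻¹ := by
  simp [art_of, artGen]

lemma art_succ (i : ℕ) : art i (.of (i + 1)) = .of i := by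
  simp [art_of, artGen]

lemma art_ne (i j : ℕ) (h : j ≠ i) (h' : j ≠ i + 1) : art i (.of j) = .of j := by
  simp [art_of, artGen, h, h']

lemma mulAut_ext {f g : MulAut F} (h : ∀ j, f (.of j) = g (.of j)) : f = g := by
  have : f.toMonoidHom = g.toMonoidHom := FreeGroup.ext_hom _ _ h
  ext y
  exact DFunLike.congr_fun this y

lemma art_rels : ∀ r ∈ braidRels, FreeGroup.lift art r = 1 := by
  rintro r (⟨i, j, hij, rfl⟩ | ⟨i, rfl⟩)
  · simp only [map_mul, map_inv, FreeGroup.lift_apply_of]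
    rw [mul_inv_eq_one, mul_inv_eq_iff_eq_mul]
    apply mulAut_ext
    intro k
    simp only [MulAut.mul_apply]
    by_cases h1 : k = i
    · subst h1
      rw [art_ne j k (by omega) (by omega), art_self]
      simp only [map_mul, map_inv]
      rw [art_ne j k (by omega) (by omega), art_ne j (k + 1) (by omega) (by omega)]
    by_cases h2 : k = i + 1
    · subst h2
      rw [art_ne j (i + 1) (by omega) (by omega), art_succ, art_ne j i (by omega) (by omega)]
    rw [art_ne i k h1 h2]
    by_cases h3 : k = j
    · subst h3
      rw [art_self]
      simp only [map_mul, map_inv]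
      rw [art_ne i k (by omega) (by omega), art_ne i (k + 1) (by omega) (by omega)]
    by_cases h4 : k = j + 1
    · subst h4
      rw [art_succ, art_ne i j (by omega) (by omega)]
    rw [art_ne j k h3 h4, art_ne i k h1 h2]
  · simp only [map_mul, map_inv, FreeGroup.lift_apply_of]
    rw [mul_inv_eq_one]
    apply mulAut_ext
    intro k
    simp only [MulAut.mul_apply]
    have e1 : art (i + 1) (.of i) = .of i := art_ne _ _ (by omega) (by omega)
    have e2 : art i (.of (i + 1 + 1)) = .of (i + 1 + 1) := art_ne _ _ (by omega) (by omega)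
    by_cases h1 : k = i
    · subst h1
      simp only [art_self, art_succ, map_mul, map_inv, e1, e2]
      group
    by_cases h2 : k = i + 1
    · subst h2
      simp only [art_self, art_succ, map_mul, map_inv, e1, e2]
    by_cases h3 : k = i + 1 + 1
    · subst h3
      simp only [art_self, art_succ, map_mul, map_inv, e1, e2]
    rw [art_ne i k h1 h2, art_ne (i + 1) k h2 h3, art_ne i k h1 h2, art_ne (i + 1) k h2 h3]

/-- The Artin representation. -/
def ρ : Binf →* MulAut F := PresentedGroup.toGroup art_rels

lemma ρ_σ (i : ℕ) : ρ (σ i) = art i := PresentedGroup.toGroup.of art_rels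

/-- Shift on the free group. -/
def s : F →* F := FreeGroup.map (· + 1)

lemma s_of (j : ℕ) : s (.of j) = .of (j + 1) := by simp [s]

lemma ρ_sh_s (b : Binf) : ∀ y : F, ρ (sh b) (s y) = s (ρ b y) := by
  induction b using Binf_induction with
  | h1 => simp
  | hm a b ha hb => intro y; simp [hb, ha]
  | hi a ha =>
    intro y
    have := ha ((ρ a)⁻¹ y)
    rw [MulAut.apply_inv_self] at this
    rw [map_inv, map_inv, map_inv, ← this, MulAut.inv_apply_self]
  | hg i =>
    intro y
    rw [sh_σ, ρ_σ, ρ_σ]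
    have : (art (i + 1)).toMonoidHom.comp s = s.comp (art i).toMonoidHom := by
      apply FreeGroup.ext_hom
      intro j
      simp only [MonoidHom.comp_apply, s_of]
      change art (i + 1) (.of (j + 1)) = s (art i (.of j))
      by_cases h1 : j = i
      · subst h1; simp [art_self, s_of]
      by_cases h2 : j = i + 1
      · subst h2; simp [art_succ, s_of]
      rw [art_ne i j h1 h2, art_ne _ _ (by omega) (by omega), s_of]
    exact DFunLike.congr_fun this y

/-- The first generator. -/
def x0 : F := .of 0

lemma ρ_sh_x0 (b : Binf) : ρ (sh b) x0 = x0 := by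
  induction b using Binf_induction with
  | h1 => simp
  | hm a b ha hb => simp [hb, ha]
  | hi a ha =>
    rw [map_inv, map_inv]
    nth_rewrite 1 [← ha]
    rw [MulAut.inv_apply_self]
  | hg i => rw [sh_σ, ρ_σ]; exact art_ne _ _ (by omega) (by omega)

lemma s_injective : Function.Injective s := FreeGroup.map_injective (add_left_injective 1)

/-! ### Words -/

/-- First letter of the reduced word. -/
def hd (g : F) : Option (ℕ × Bool) := g.toWord.head?

/-- A letter. -/
def lt (j : ℕ) (ε : Bool) : F := FreeGroup.mk [(j, ε)]

lemma lt_true (j : ℕ) : lt j true = .of j := rfl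

lemma lt_false (j : ℕ) : lt j false = (.of j)⁻¹ := by
  simp [lt, FreeGroup.of, FreeGroup.inv_mk, FreeGroup.invRev]

lemma mk_cons (j : ℕ) (ε : Bool) (w : List (ℕ × Bool)) :
    FreeGroup.mk ((j, ε) :: w) = lt j ε * FreeGroup.mk w := by
  simp [lt, FreeGroup.mul_mk]

lemma toWord_cons {j : ℕ} {ε : Bool} {g : F} (h : hd g ≠ some (j, !ε)) :
    (lt j ε * g).toWord = (j, ε) :: g.toWord := by
  have e : lt j ε * g = FreeGroup.mk ((j, ε) :: g.toWord) := by
    rw [mk_cons, FreeGroup.mk_toWord]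
  rw [e, FreeGroup.toWord_mk]
  apply FreeGroup.IsReduced.reduce_eq
  have hr : FreeGroup.IsReduced g.toWord := FreeGroup.isReduced_toWord
  unfold hd at h
  generalize g.toWord = w at h hr
  cases w with
  | nil => simp [FreeGroup.IsReduced]
  | cons a w =>
    obtain ⟨k, δ⟩ := a
    simp only [FreeGroup.IsReduced, List.isChain_cons_cons] at hr ⊢
    refine ⟨?_, hr⟩
    simp only [List.head?_cons, ne_eq, Option.some.injEq, Prod.mk.injEq, not_and] at h
    intro hk
    have := h hk.symm
    revert this
    cases ε <;> cases δ <;> simp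

lemma hd_cons {j : ℕ} {ε : Bool} {g : F} (h : hd g ≠ some (j, !ε)) :
    hd (lt j ε * g) = some (j, ε) := by
  rw [hd, toWord_cons h]; rfl

lemma hd_mk {w : List (ℕ × Bool)} (h : FreeGroup.IsReduced w) : hd (FreeGroup.mk w) = w.head? := by
  rw [hd, FreeGroup.toWord_mk, h.reduce_eq]

lemma hd_one : hd 1 = none := by simp [hd]

lemma reduced_tail {a : ℕ × Bool} {w : List (ℕ × Bool)} (h : FreeGroup.IsReduced (a :: w)) :
    FreeGroup.IsReduced w := by
  unfold FreeGroup.IsReduced at *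
  exact h.tail

lemma reduced_head {j : ℕ} {ε : Bool} {w : List (ℕ × Bool)}
    (h : FreeGroup.IsReduced ((j, ε) :: w)) : w.head? ≠ some (j, !ε) := by
  cases w with
  | nil => simp
  | cons a w =>
    obtain ⟨k, δ⟩ := a
    simp only [FreeGroup.IsReduced, List.isChain_cons_cons] at h
    simp only [List.head?_cons, ne_eq, Option.some.injEq, Prod.mk.injEq, not_and]
    intro hk
    have := h.1 hk.symm
    subst this
    cases ε <;> simp

/-- Case description for the action of the first generator. -/
def RR : Option (ℕ × Bool) → Option (ℕ × Bool) → Option (ℕ × Bool) → Prop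
  | none, A, B => A = none ∧ B = some (0, false)
  | some (0, ε), A, B => A = some (0, true) ∧ B = some (1, ε)
  | some (1, true), A, B => A = some (0, true) ∧ ∀ δ, B ≠ some (1, δ)
  | some (1, false), A, B => B = some (0, false) ∧ (A = some (0, false) ∨ ∃ δ, A = some (1, δ))
  | some (k + 2, δ), A, B => A = some (k + 2, δ) ∧ B = some (0, false)

lemma art0_lt0 (ε : Bool) : art 0 (lt 0 ε) = lt 0 true * lt 1 ε * lt 0 false := by
  cases ε
  · simp only [lt_false, lt_true, map_inv, art_self]; group
  · simp only [lt_false, lt_true, art_self]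

lemma art0_lt1 (ε : Bool) : art 0 (lt 1 ε) = lt 0 ε := by
  have := art_succ 0
  cases ε
  · simp only [lt_false, map_inv]; rw [← this]
  · simp only [lt_true]; rw [← this]

lemma art0_ltk (k : ℕ) (ε : Bool) : art 0 (lt (k + 2) ε) = lt (k + 2) ε := by
  have := art_ne 0 (k + 2) (by omega) (by omega)
  cases ε
  · simp only [lt_false, map_inv]; rw [this]
  · simp only [lt_true]; rw [this]

lemma lt0_cancel (g : F) : lt 0 false * (lt 0 true * g) = g := by
  rw [lt_false, lt_true]; group

lemma RR_main (w : List (ℕ × Bool)) (hw : FreeGroup.IsReduced w) :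
    RR w.head? (hd (art 0 (FreeGroup.mk w))) (hd (lt 0 false * art 0 (FreeGroup.mk w))) := by
  induction w with
  | nil =>
    refine ⟨?_, ?_⟩
    · rw [← FreeGroup.one_eq_mk, map_one, hd_one]
    · apply hd_cons
      rw [← FreeGroup.one_eq_mk, map_one, hd_one]; simp
  | cons a w ih =>
    obtain ⟨j, ε⟩ := a
    have ih := ih (reduced_tail hw)
    have hh := reduced_head hw
    rw [mk_cons, map_mul]
    generalize art 0 (FreeGroup.mk w) = v at *
    match j with
    | 0 =>
      rw [art0_lt0]
      have e : lt 0 true * lt 1 ε * lt 0 false * v = lt 0 true * (lt 1 ε * (lt 0 false * v)) := by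
        simp only [mul_assoc]
      rw [e, lt0_cancel]
      have h1 : hd (lt 0 false * v) ≠ some (1, !ε) := by
        match hz : w.head? with
        | none => rw [hz] at ih; rw [ih.2]; simp
        | some (0, ε') =>
          rw [hz] at ih hh; rw [ih.2]; simpa using hh
        | some (1, true) => rw [hz] at ih; exact ih.2 _
        | some (1, false) => rw [hz] at ih; rw [ih.1]; simp
        | some (k + 2, δ) => rw [hz] at ih; rw [ih.2]; simp
      have h2 := hd_cons h1
      refine ⟨hd_cons ?_, h2⟩
      rw [h2]; simp
    | 1 =>
      rw [art0_lt1]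
      cases ε with
      | true =>
        rw [lt0_cancel]
        have h1 : hd v ≠ some (0, false) ∧ ∀ δ, hd v ≠ some (1, δ) := by
          match hz : w.head? with
          | none => rw [hz] at ih; rw [ih.1]; simp
          | some (0, ε') => rw [hz] at ih hh; rw [ih.1]; simp
          | some (1, true) => rw [hz] at ih; rw [ih.1]; simp
          | some (1, false) => rw [hz] at hh; simp at hh
          | some (k + 2, δ) => rw [hz] at ih; rw [ih.1]; simp
        exact ⟨hd_cons h1.1, h1.2⟩
      | false =>
        have h1 : hd (lt 0 false * v) = some (0, false) ∨
            ∃ δ, hd (lt 0 false * v) = some (1, δ) := by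
          match hz : w.head? with
          | none => rw [hz] at ih; exact .inl ih.2
          | some (0, ε') => rw [hz] at ih; exact .inr ⟨_, ih.2⟩
          | some (1, true) => rw [hz] at hh; simp at hh
          | some (1, false) => rw [hz] at ih; exact .inl ih.1
          | some (k + 2, δ) => rw [hz] at ih; exact .inl ih.2
        refine ⟨hd_cons ?_, h1⟩
        rcases h1 with h1 | ⟨δ, h1⟩ <;> rw [h1] <;> simp
    | k + 2 =>
      rw [art0_ltk]
      have h1 : hd v ≠ some (k + 2, !ε) := by
        match hz : w.head? with
        | none => rw [hz] at ih; rw [ih.1]; simp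
        | some (0, ε') => rw [hz] at ih; rw [ih.1]; simp
        | some (1, true) => rw [hz] at ih; rw [ih.1]; simp
        | some (1, false) =>
          rw [hz] at ih
          rcases ih.2 with h1 | ⟨δ, h1⟩ <;> rw [h1] <;> simp
        | some (k' + 2, δ) => rw [hz] at ih hh; rw [ih.1]; exact hh
      have h2 := hd_cons h1
      refine ⟨h2, hd_cons ?_⟩
      rw [h2]; simp

lemma hd_art0 {g : F} (h : hd g = some (0, true)) : hd (art 0 g) = some (0, true) := by
  have := RR_main g.toWord FreeGroup.isReduced_toWord
  rw [FreeGroup.mk_toWord, show g.toWord.head? = some (0, true) from h] at this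
  exact this.1

lemma hd_s_ne (y : F) (ε : Bool) : hd (s y) ≠ some (0, ε) := by
  have e : (s y).toWord = y.toWord.map (fun a => (a.1 + 1, a.2)) := by
    have : s y = FreeGroup.mk (y.toWord.map (fun a => (a.1 + 1, a.2))) := by
      conv_lhs => rw [← FreeGroup.mk_toWord (x := y)]
      simp only [s, FreeGroup.map.mk]
    rw [this, FreeGroup.toWord_mk]
    apply FreeGroup.IsReduced.reduce_eq
    have hr : FreeGroup.IsReduced y.toWord := FreeGroup.isReduced_toWord
    unfold FreeGroup.IsReduced at *
    rw [List.isChain_map]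
    refine hr.imp ?_
    intro a b hab h
    exact hab (by simpa using h)
  rw [hd, e]
  cases y.toWord with
  | nil => simp
  | cons a w => simp

lemma s_lt (j : ℕ) (ε : Bool) : s (lt j ε) = lt (j + 1) ε := by
  simp [s, lt]

/-- If `g` starts with the letter `0`, then so does `s y * g`, or else it starts with a letter
of `s y`. -/
lemma hd_s_mul {g : F} {ε : Bool} (h : hd g = some (0, ε)) (w : List (ℕ × Bool))
    (hw : FreeGroup.IsReduced w) :
    hd (s (FreeGroup.mk w) * g) =
      match w.head? with
      | none => some (0, ε)
      | some (j, δ) => some (j + 1, δ) := by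
  induction w with
  | nil => rw [← FreeGroup.one_eq_mk, map_one, one_mul, h]; rfl
  | cons a w ih =>
    obtain ⟨j, δ⟩ := a
    have ih := ih (reduced_tail hw)
    have hh := reduced_head hw
    rw [mk_cons, map_mul, s_lt, mul_assoc]
    apply hd_cons
    rw [ih]
    match hz : w.head? with
    | none => simp
    | some (k, δ') => rw [hz] at hh; simpa using hh

/-- Elements whose reduced word starts with the letter `(0, ε)`. -/
inductive Start : Bool → F → Prop
  | one (ε : Bool) (y : F) : Start ε (lt 0 ε * s y)
  | cons {ε ε' : Bool} {y g : F} : Start ε' g → (y ≠ 1 ∨ ε' = ε) → Start ε (lt 0 ε * (s y * g))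

lemma Start.hd {ε : Bool} {g : F} (h : Start ε g) : hd g = some (0, ε) := by
  induction h with
  | one ε y => exact hd_cons (hd_s_ne y _)
  | @cons ε ε' y g _ hy ih =>
    apply hd_cons
    have := hd_s_mul ih y.toWord FreeGroup.isReduced_toWord
    rw [FreeGroup.mk_toWord] at this
    rw [this]
    match hz : y.toWord with
    | [] =>
      rcases hy with hy | rfl
      · exact absurd (FreeGroup.toWord_eq_nil_iff.mp hz) hy
      · simp
    | (j, δ) :: w => simp

lemma start_decomp (w : List (ℕ × Bool)) (hw : FreeGroup.IsReduced w) :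
    ((∃ y, FreeGroup.mk w = s y) ∨ ∃ y ε g, Start ε g ∧ FreeGroup.mk w = s y * g) ∧
    ∀ ε, w.head? = some (0, ε) → Start ε (FreeGroup.mk w) := by
  induction w with
  | nil => exact ⟨.inl ⟨1, by rw [← FreeGroup.one_eq_mk, map_one]⟩, by simp⟩
  | cons a w ih =>
    obtain ⟨j, ε⟩ := a
    have ih := (ih (reduced_tail hw)).1
    have hh := reduced_head hw
    match j with
    | 0 =>
      have key : Start ε (FreeGroup.mk ((0, ε) :: w)) := by
        rw [mk_cons]
        rcases ih with ⟨y, hy⟩ | ⟨y, ε', g, hg, hy⟩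
        · rw [hy]; exact .one _ _
        · rw [hy]
          by_cases h1 : y = 1
          · subst h1
            refine .cons hg (.inr ?_)
            rw [map_one, one_mul] at hy
            have := hg.hd
            rw [← hy, hd_mk (reduced_tail hw)] at this
            rw [this] at hh
            revert hh
            cases ε <;> cases ε' <;> simp
          · exact .cons hg (.inl h1)
      refine ⟨.inr ⟨1, ε, _, key, by rw [map_one, one_mul]⟩, ?_⟩
      intro δ hδ
      simp only [List.head?_cons, Option.some.injEq, Prod.mk.injEq, true_and] at hδ
      subst hδ
      exact key
    | k + 1 =>
      refine ⟨?_, by simp⟩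
      rw [mk_cons, ← s_lt]
      rcases ih with ⟨y, hy⟩ | ⟨y, ε', g, hg, hy⟩
      · exact .inl ⟨lt k ε * y, by rw [hy, map_mul]⟩
      · exact .inr ⟨lt k ε * y, ε', g, hg, by rw [hy, map_mul, mul_assoc]⟩

lemma start_iff {g : F} {ε : Bool} : Start ε g ↔ hd g = some (0, ε) := by
  refine ⟨Start.hd, fun h => ?_⟩
  have := (start_decomp g.toWord FreeGroup.isReduced_toWord).2 ε h
  rwa [FreeGroup.mk_toWord] at this

lemma Start.mul_s {ε : Bool} {g : F} (h : Start ε g) (z : F) : Start ε (g * s z) := by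
  induction h with
  | one ε y => rw [mul_assoc, ← map_mul]; exact .one _ _
  | cons _ hy ih => rw [mul_assoc, mul_assoc]; exact .cons ih hy

lemma ρ_sh_lt (b : Binf) (ε : Bool) : ρ (sh b) (lt 0 ε) = lt 0 ε := by
  have h : ρ (sh b) (.of 0) = .of 0 := ρ_sh_x0 b
  cases ε
  · rw [lt_false, map_inv, h]
  · rw [lt_true, h]

lemma Start.sh {ε : Bool} {g : F} (h : Start ε g) (b : Binf) : Start ε (ρ (sh b) g) := by
  induction h with
  | one ε y => rw [map_mul, ρ_sh_lt, ρ_sh_s]; exact .one _ _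
  | cons _ hy ih =>
    rw [map_mul, map_mul, ρ_sh_lt, ρ_sh_s]
    refine .cons ih (hy.imp_left ?_)
    intro hy h
    exact hy (by simpa using h)

lemma Start.σ0 {g : F} (h : Start true g) : Start true (ρ (σ 0) g) := by
  rw [start_iff] at h ⊢
  rw [ρ_σ]
  exact hd_art0 h

lemma not_start_s (y : F) : ¬ Start true (s y) := fun h => hd_s_ne y true h.hd

/-! ### Evaluation and the final argument -/

/-- Evaluation of terms in the braid group. -/
def ev : Tm → Binf
  | .x => 1
  | .app a b => sc (ev a) (ev b)

lemma ev_app (a b : Tm) : ev (a ∙ b) = sc (ev a) (ev b) := rfl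

lemma ev_eqv {a b : Tm} (h : a ≈ᵈ b) : ev a = ev b := by
  induction h with
  | rel _ _ h =>
    induction h with
    | root a b c => simp only [ev_app]; exact sc_ld _ _ _
    | left b _ ih => simp only [ev_app, ih]
    | right a _ ih => simp only [ev_app, ih]
  | refl _ => rfl
  | symm _ _ _ ih => exact ih.symm
  | trans _ _ _ _ _ ih1 ih2 => exact ih1.trans ih2

lemma ev_special (t : Tm) : ev t ∈ Special := by
  intro P h1 hm
  induction t with
  | x => exact h1
  | app a b iha ihb => exact hm _ _ iha ihb

lemma special_ev {b : Binf} (h : b ∈ Special) : ∃ t, ev t = b := by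
  refine h (fun b => ∃ t, ev t = b) ⟨.x, rfl⟩ ?_
  rintro _ _ ⟨t, rfl⟩ ⟨u, rfl⟩
  exact ⟨t ∙ u, rfl⟩

lemma ρσ0_s_x0 : ρ (σ 0) (s x0) = x0 := by
  rw [ρ_σ, x0, s_of]; exact art_succ 0

lemma ρσ0_x0 : ρ (σ 0) x0 = x0 * s x0 * x0⁻¹ := by
  rw [ρ_σ, x0, s_of]; exact art_self 0

lemma ρσ0_ss (z : F) : ρ (σ 0) (s (s z)) = s (s z) := by
  rw [ρ_σ]
  have : (art 0).toMonoidHom.comp (s.comp s) = s.comp s := by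
    apply FreeGroup.ext_hom
    intro j
    simp only [MonoidHom.comp_apply, s_of]
    exact art_ne _ _ (by omega) (by omega)
  exact DFunLike.congr_fun this z

lemma ρ_sc (a b : Binf) (g : F) :
    ρ (sc a b) g = ρ a (ρ (sh b) (ρ (σ 0) (ρ (sh a⁻¹) g))) := by
  simp [sc]

lemma ρ_sc_s (a b : Binf) (y : F) :
    ρ (sc a b) (s (ρ a y)) = ρ a (ρ (sh b) (ρ (σ 0) (s y))) := by
  rw [ρ_sc, ρ_sh_s, map_inv, MulAut.inv_apply_self]

lemma ρ_sc_x0 (a b : Binf) :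
    ρ (sc a b) x0 = ρ a (ρ (sh b) (ρ (σ 0) x0)) := by
  rw [ρ_sc, ρ_sh_x0]

/-- The free group cocycle on terms. -/
def Wb : Tm → F
  | .x => 1
  | .app a b => ρ (ev a) (x0 * s (Wb b))

lemma Wb_app (a b : Tm) : Wb (a ∙ b) = ρ (ev a) (x0 * s (Wb b)) := rfl

lemma Wb_eqv {a b : Tm} (h : a ≈ᵈ b) : Wb a = Wb b := by
  induction h with
  | rel _ _ h =>
    induction h with
    | root a b c =>
      simp only [Wb_app, ev_app]
      rw [map_mul (ρ (sc (ev a) (ev b))), ρ_sc_s, ρ_sc_x0, ← map_mul, ← map_mul, ← map_mul]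
      congr 1
      rw [← ρ_sh_s (ev b)]
      nth_rewrite 1 [← ρ_sh_x0 (ev b)]
      rw [← map_mul]
      congr 1
      simp only [map_mul, ρσ0_x0, ρσ0_s_x0, ρσ0_ss]
      group
    | left b h ih => simp only [Wb_app, ev_eqv (.rel _ _ h)]
    | right a _ ih => simp only [Wb_app, ih]
  | refl _ => rfl
  | symm _ _ _ ih => exact ih.symm
  | trans _ _ _ _ _ ih1 ih2 => exact ih1.trans ih2

lemma ρ_sc_W (p b : Binf) : ρ (sc p b) (s (ρ p x0)) = ρ p x0 := by
  rw [ρ_sc_s, ρσ0_s_x0, ρ_sh_x0]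

lemma Wb_low (p e : Tm) : Wb (p ∙ e) = Wb (low p e) * ρ (ev p) x0 := by
  induction e with
  | x => simp [Wb, low]
  | app b e _ ih =>
    rw [Wb_eqv (Eqv.ld p b e), Wb_app, ih, map_mul s, ← mul_assoc, map_mul, ev_app, ρ_sc_W]
    rfl

lemma Wb_fix (t : Tm) : ρ (ev t) (s (Wb t)) = Wb t := by
  induction t with
  | x => simp [Wb]
  | app a b _ ih =>
    rw [Wb_app, ev_app, ρ_sc_s, map_mul, map_mul, ρσ0_s_x0, ρσ0_ss, map_mul, ρ_sh_x0, ρ_sh_s, ih]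

lemma Start.le {a b : Tm} (h : Le a b) :
    ∀ {g : F}, Start true g → Start true (ρ (ev a)⁻¹ (ρ (ev b) g)) := by
  induction h with
  | refl e =>
    intro g hg
    rw [ev_eqv e, map_inv, MulAut.inv_apply_self]
    exact hg
  | app _ e ih =>
    intro g hg
    rw [← ev_eqv e, ev_app, ρ_sc]
    exact ih (((hg.sh _).σ0).sh _)

lemma start_x0_s (y : F) : Start true (x0 * s y) := Start.one true y

lemma main (p w : Tm) (β' : Binf) (h : sc (ev p) β' = ev w) : β' ∈ Special := by
  obtain ⟨e, h1, h2⟩ := cut w p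
  cases h2 with
  | refl he =>
    have h3 := ev_eqv he
    rw [← h, ev_app] at h3
    have h4 : sh β' = sh (ev e) := by
      simpa [sc] using h3
    rw [sh_injective h4]
    exact ev_special e
  | @app b c _ hb hc =>
    exfalso
    have hB : Start true (ρ (ev w)⁻¹ (Wb (p ∙ e))) := by
      rw [← Wb_eqv hc, Wb_app]
      exact Start.le hb (start_x0_s _)
    have hW : ρ (ev w)⁻¹ (ρ (ev p) x0) = s (ρ (ev p) x0) := by
      have := ρ_sc_W (ev p) β'
      rw [h] at this
      nth_rewrite 1 [← this]
      rw [map_inv, MulAut.inv_apply_self]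
    rw [Wb_low, map_mul, hW] at hB
    have hα := hB.mul_s (ρ (ev p) x0)⁻¹
    rw [map_inv s, mul_inv_cancel_right] at hα
    have hlow := Start.le h1 hα
    rw [map_inv ρ (ev w), MulAut.apply_inv_self] at hlow
    have hf := Wb_fix (low p e)
    rw [← hf, map_inv, MulAut.inv_apply_self] at hlow
    exact not_start_s _ hlow

end LDB

/-- special braids are closed under left division. -/
theorem special_closed_left_division (β γ β' : Binf)
    (hβ : β ∈ Special) (hγ : γ ∈ Special) (h : sc β β' = γ) :
    β' ∈ Special := by
  obtain ⟨p, rfl⟩ := LDB.special_ev hβ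
  obtain ⟨w, rfl⟩ := LDB.special_ev hγ
  exact LDB.main p w β' h
end
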